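/- arXiv:1411.7467 — 4 statements merged into one kernel-verified Lean document; each statement's English description precedes it below -/
import Mathlib

section
/- Let γ ≥ 1/2 be a half-integer, ε ∈ {0, 1/2}, and let j be a real number with 2j ∈ ℤ and j − ε ∉ ℤ. Then for every M ∈ ε + γ + ℤ, the restriction Q_M of the Casimir 𝒬 of F_γ ⊗ C^ε_j to V_M is diagonalizable if and only if j > γ − 1 or j < −γ; consequently 𝒬 is diagonalizable on F_γ ⊗ C^ε_j if and only if j > γ − 1 or j < −γ. -/
/-!
On each weight space `V_M` the Casimir is nonderogatory with eigenvalues `-(j+μ)(j+μ+1)`,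
`μ = -γ, …, γ`, so it is diagonalizable exactly when these are distinct.

Realize `F_γ` as the polynomials of degree `2γ` in `s, t`, and `C^ε_j` by the formal monomials
`x^(j+m) y^(j-m)`; `gaugeFactor` is the change of normalization between these monomials and the given
basis. Multiplication by the invariant `x t - y s` commutes with the Casimir
(`fwdDiff_three_term`). Hence in the basis `(x t - y s)^k s^(2γ-k) x^a y^(b-k)` of `V_M`, whose
members are the iterated forward differences at `0` of the monomial basis, the Casimir is bidiagonal
with diagonal `-(j+γ-k)(j+γ-k+1)` and off-diagonal entries that are nonzero because `j - ε ∉ ℤ`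
(`diagOn_three_term_iff`). A bidiagonal operator of that kind has a cyclic vector, which gives the
criterion by distinctness (`diagOn_bidiagonal_iff`); two diagonal entries, with
indices `k ≠ l`, agree exactly when `k + l = 2j + 2γ + 1` (`injOn_iff`). The statement on the whole space follows since the projections
onto the weight spaces commute with the Casimir (`diagOn_top_iff`).
-/

/-!
Couplings F_γ ⊗ C^ε_j for sl(2,ℝ).

Conventions: γ = G/2 with `G : ℕ`, `1 ≤ G`; ε is encoded by `E : ℂ` (with `E = 0 ∨ E = 1/2`);
j ∈ ℂ. The space F_γ ⊗ C^ε_j has basis indexed by `(ν, z) : Fin (G+1) × ℤ`, the basis vector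
`single (ν,z) 1` representing |γ, ν-γ⟩ ⊗ |j, ε+z⟩.
-/

noncomputable section

/-- Principal branch of the complex square root. -/
def csqrt (z : ℂ) : ℂ := z ^ ((1 : ℂ) / 2)

/-- C₊(j,m) = i √(j-m) √(j+m+1). -/
def Cp (j m : ℂ) : ℂ := Complex.I * csqrt (j - m) * csqrt (j + m + 1)

/-- C₋(j,m) = i √(j+m) √(j-m+1). -/
def Cm (j m : ℂ) : ℂ := Complex.I * csqrt (j + m) * csqrt (j - m + 1)

/-- γ = G/2, as a complex number. -/
def gam (G : ℕ) : ℂ := (G : ℂ) / 2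

/-- μ = ν - γ for ν : Fin (G+1). -/
def muc (G : ℕ) (ν : Fin (G + 1)) : ℂ := ((ν : ℕ) : ℂ) - gam G

/-- m = ε + z for z : ℤ. -/
def mcont (E : ℂ) (z : ℤ) : ℂ := E + (z : ℂ)

/-- The vector space F_γ ⊗ C^ε_j. -/
abbrev Wc (G : ℕ) := (Fin (G + 1) × ℤ) →₀ ℂ

/-- Basis vector with coefficient, out-of-range F_γ indices giving 0. -/
def eVc (G : ℕ) (i : ℤ) (z : ℤ) (c : ℂ) : Wc G :=
  if h : 0 ≤ i ∧ i < (G : ℤ) + 1 then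
    Finsupp.single ((⟨i.toNat, by omega⟩ : Fin (G + 1)), z) c
  else 0

/-- 𝒥₀ = J₀ ⊗ 1 + 1 ⊗ J₀. -/
def J0c (G : ℕ) (E : ℂ) : Wc G →ₗ[ℂ] Wc G :=
  Finsupp.lsum ℂ fun p => LinearMap.toSpanSingleton ℂ (Wc G)
    (Finsupp.single p (muc G p.1 + mcont E p.2))

/-- 𝒥₊ = J₊ ⊗ 1 + 1 ⊗ J₊. -/
def Jpc (G : ℕ) (j E : ℂ) : Wc G →ₗ[ℂ] Wc G :=
  Finsupp.lsum ℂ fun p => LinearMap.toSpanSingleton ℂ (Wc G)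
    (eVc G ((p.1 : ℕ) + 1) p.2 (Cp (gam G) (muc G p.1)) +
      Finsupp.single (p.1, p.2 + 1) (Cp j (mcont E p.2)))

/-- 𝒥₋ = J₋ ⊗ 1 + 1 ⊗ J₋. -/
def Jmc (G : ℕ) (j E : ℂ) : Wc G →ₗ[ℂ] Wc G :=
  Finsupp.lsum ℂ fun p => LinearMap.toSpanSingleton ℂ (Wc G)
    (eVc G ((p.1 : ℕ) - 1) p.2 (Cm (gam G) (muc G p.1)) +
      Finsupp.single (p.1, p.2 - 1) (Cm j (mcont E p.2)))

/-- The Casimir 𝒬 = -𝒥₀(𝒥₀+1) + 𝒥₋𝒥₊. -/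
def Qc (G : ℕ) (j E : ℂ) : Wc G →ₗ[ℂ] Wc G :=
  -(J0c G E ∘ₗ (J0c G E + LinearMap.id)) + Jmc G j E ∘ₗ Jpc G j E

/-- The 𝒥₀-eigenvalue-M subspace V_M of F_γ ⊗ C^ε_j for M = ε + γ + M₀, M₀ : ℤ:
spanned by the |γ,ν-γ⟩⊗|j,ε+z⟩ with (ν-γ) + (ε+z) = M, i.e. z = G + M₀ - ν. -/
def VMc (G : ℕ) (M₀ : ℤ) : Submodule ℂ (Wc G) :=
  Submodule.span ℂ
    {w : Wc G | ∃ ν : Fin (G + 1), w = Finsupp.single (ν, (G : ℤ) + M₀ - (ν : ℕ)) 1}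

/-- q_(μ) = -(j+μ)(j+μ+1) with μ = t - γ. -/
def qc (G : ℕ) (j : ℂ) (t : Fin (G + 1)) : ℂ :=
  -((j + muc G t) * (j + muc G t + 1))

/-- A linear operator is diagonalizable on an invariant subspace `p` iff `p` is spanned by
eigenvectors of the operator lying in `p`. -/
def DiagOn {V : Type*} [AddCommGroup V] [Module ℂ V]
    (f : V →ₗ[ℂ] V) (p : Submodule ℂ V) : Prop :=
  Submodule.span ℂ {w : V | w ∈ p ∧ ∃ c : ℂ, f w = c • w} = p

/-! ### Operators that are bidiagonal on a family of vectors -/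

/-- If `f - a` maps `v` into the span of eigenvectors whose eigenvalues differ from `a`, then `v`
differs from an element of that span by an `a`-eigenvector. -/
lemma mem_span_eigen_of_sub {V : Type*} [AddCommGroup V] [Module ℂ V] (f : V →ₗ[ℂ] V)
    (p : Submodule ℂ V) (A : Set ℂ) (a : ℂ) (ha : a ∉ A) (v : V) (hv : v ∈ p)
    (h : f v - a • v ∈ Submodule.span ℂ {w : V | w ∈ p ∧ ∃ c ∈ A, f w = c • w}) :
    v ∈ Submodule.span ℂ {w : V | w ∈ p ∧ ∃ c ∈ insert a A, f w = c • w} := by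
  have hp : Submodule.span ℂ {w : V | w ∈ p ∧ ∃ c ∈ A, f w = c • w} ≤ p :=
    Submodule.span_le.2 fun w hw => hw.1
  have key : ∀ x ∈ Submodule.span ℂ {w : V | w ∈ p ∧ ∃ c ∈ A, f w = c • w},
      ∃ y ∈ Submodule.span ℂ {w : V | w ∈ p ∧ ∃ c ∈ A, f w = c • w}, f y - a • y = x := by
    intro x hx
    induction hx using Submodule.span_induction with
    | mem x hx =>
      obtain ⟨_, c, hc, hfx⟩ := id hx
      have hne : c - a ≠ 0 := sub_ne_zero.2 fun h => ha (h ▸ hc)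
      refine ⟨(c - a)⁻¹ • x, Submodule.smul_mem _ _ (Submodule.subset_span hx), ?_⟩
      rw [map_smul, hfx, smul_comm a, ← smul_sub, ← sub_smul, smul_smul, inv_mul_cancel₀ hne,
        one_smul]
    | zero => exact ⟨0, Submodule.zero_mem _, by simp⟩
    | add x y _ _ hx hy =>
      obtain ⟨x', hx', rfl⟩ := hx
      obtain ⟨y', hy', rfl⟩ := hy
      exact ⟨x' + y', Submodule.add_mem _ hx' hy', by rw [map_add, smul_add]; abel⟩
    | smul r x _ hx =>
      obtain ⟨x', hx', rfl⟩ := hx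
      exact ⟨r • x', Submodule.smul_mem _ _ hx', by rw [map_smul, smul_comm a, smul_sub]⟩
  obtain ⟨y, hy, hyx⟩ := key _ h
  have h1 : v - y ∈ Submodule.span ℂ {w : V | w ∈ p ∧ ∃ c ∈ insert a A, f w = c • w} := by
    refine Submodule.subset_span ⟨p.sub_mem hv (hp hy), a, Set.mem_insert _ _, ?_⟩
    rw [map_sub, smul_sub]
    rw [sub_eq_sub_iff_sub_eq_sub]
    exact hyx.symm
  have h2 : y ∈ Submodule.span ℂ {w : V | w ∈ p ∧ ∃ c ∈ insert a A, f w = c • w} := by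
    refine Submodule.span_mono ?_ hy
    rintro w ⟨hw, c, hc, hfw⟩
    exact ⟨hw, c, Set.mem_insert_of_mem _ hc, hfw⟩
  simpa using Submodule.add_mem _ h1 h2

section Bidiagonal

variable {V : Type*} [AddCommGroup V] [Module ℂ V] {f : V →ₗ[ℂ] V} {w : ℕ → V} {q c : ℕ → ℂ}
  {G : ℕ}

/-- Distinct diagonal entries: by downward induction each `w k` is a combination of eigenvectors
with eigenvalues among the `q i`, `k ≤ i`. -/
lemma diagOn_of_injOn
    (hf : ∀ k ≤ G, f (w k) = q k • w k + c k • w (k + 1)) (hcG : c G = 0)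
    (hq : Set.InjOn q (Set.Iic G)) : DiagOn f (Submodule.span ℂ (w '' Set.Iic G)) := by
  set p := Submodule.span ℂ (w '' Set.Iic G) with hp
  have hwp : ∀ k ≤ G, w k ∈ p := fun k hk => Submodule.subset_span ⟨k, hk, rfl⟩
  have key : ∀ n ≤ G, w (G - n) ∈
      Submodule.span ℂ {x : V | x ∈ p ∧ ∃ b ∈ q '' Set.Icc (G - n) G, f x = b • x} := by
    intro n
    induction n with
    | zero =>
      intro _
      refine Submodule.subset_span ⟨hwp _ (by omega), q G, ⟨G, by simp, rfl⟩, ?_⟩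
      simp [hf G le_rfl, hcG]
    | succ n ih =>
      intro hn
      have hI : q '' Set.Icc (G - (n + 1)) G
          = insert (q (G - (n + 1))) (q '' Set.Icc (G - n) G) := by
        rw [← Set.image_insert_eq]
        congr 1
        ext x
        simp only [Set.mem_Icc, Set.mem_insert_iff]
        omega
      rw [hI]
      apply mem_span_eigen_of_sub f p _ _ _ _ (hwp _ (by omega))
      · rw [hf _ (by omega), add_sub_cancel_left, show G - (n + 1) + 1 = G - n by omega]
        exact Submodule.smul_mem _ _ (ih (by omega))
      · rintro ⟨i, hi, hqi⟩
        have := hq (show i ≤ G from hi.2) (show G - (n + 1) ≤ G by omega) hqi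
        have := hi.1
        omega
  refine le_antisymm (Submodule.span_le.2 fun x hx => hx.1) ?_
  rw [hp, Submodule.span_le]
  rintro _ ⟨k, hk, rfl⟩
  have hk' : k ≤ G := hk
  have := key (G - k) (by omega)
  rw [show G - (G - k) = k by omega] at this
  refine Submodule.span_mono ?_ this
  rintro x ⟨hx, b, _, hb⟩
  exact ⟨hx, b, hb⟩

/-- Every eigenvalue on the span of the `w k` is one of the diagonal entries: an eigenvector with
another eigenvalue lies in the span of `w k, …, w G` for every `k`. -/
lemma eigenvalue_mem
    (hf : ∀ k ≤ G, f (w k) = q k • w k + c k • w (k + 1)) (hcG : c G = 0)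
    (x : V) (hx : x ∈ Submodule.span ℂ (w '' Set.Iic G)) (b : ℂ) (hb : f x = b • x) (hx0 : x ≠ 0) :
    ∃ k ≤ G, b = q k := by
  by_contra! hne
  have step : ∀ k ≤ G, ∀ y ∈ Submodule.span ℂ (w '' Set.Icc k G),
      f y - q k • y ∈ Submodule.span ℂ (w '' Set.Icc (k + 1) G) := by
    intro k hk y hy
    induction hy using Submodule.span_induction with
    | mem y hy =>
      obtain ⟨i, hi, rfl⟩ := hy
      have h2 : c i • w (i + 1) ∈ Submodule.span ℂ (w '' Set.Icc (k + 1) G) := by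
        rcases eq_or_lt_of_le hi.2 with h | h
        · rw [h, hcG, zero_smul]; exact Submodule.zero_mem _
        · exact Submodule.smul_mem _ _ (Submodule.subset_span ⟨i + 1, ⟨by have := hi.1; omega, h⟩, rfl⟩)
      rw [hf i hi.2]
      rcases eq_or_lt_of_le hi.1 with h | h
      · subst h; simpa using h2
      · have h1 : w i ∈ Submodule.span ℂ (w '' Set.Icc (k + 1) G) :=
          Submodule.subset_span ⟨i, ⟨h, hi.2⟩, rfl⟩
        exact Submodule.sub_mem _ (Submodule.add_mem _ (Submodule.smul_mem _ _ h1) h2)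
          (Submodule.smul_mem _ _ h1)
    | zero => simp
    | add y z _ _ hy hz =>
      have := Submodule.add_mem _ hy hz
      rw [map_add, smul_add]
      convert this using 1; abel
    | smul r y _ hy =>
      rw [map_smul, smul_comm (q k), ← smul_sub]
      exact Submodule.smul_mem _ _ hy
  have all : ∀ k ≤ G + 1, x ∈ Submodule.span ℂ (w '' Set.Icc k G) := by
    intro k
    induction k with
    | zero =>
      intro _
      convert hx using 3
      ext i; simp
    | succ k ih =>
      intro hk
      have h := step k (by omega) x (ih (by omega))
      rw [hb, ← sub_smul] at h
      exact (Submodule.smul_mem_iff _ (sub_ne_zero.2 (hne k (by omega)))).1 h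
  have := all (G + 1) le_rfl
  simp at this
  exact hx0 this

/-- `w 0` is a cyclic vector: `n` factors `f - z` take it to a nonzero multiple of `w n`
plus lower terms. -/
lemma cyclic_leading
    (hf : ∀ k ≤ G, f (w k) = q k • w k + c k • w (k + 1)) (hc : ∀ k < G, c k ≠ 0) (L : List ℂ) :
    L.length ≤ G → ∃ C : ℂ, C ≠ 0 ∧
      (L.map fun z => f - z • (LinearMap.id : V →ₗ[ℂ] V)).foldr (fun g x => g x) (w 0)
        - C • w L.length ∈ Submodule.span ℂ (w '' Set.Iio L.length) := by
  induction L with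
  | nil => intro _; exact ⟨1, one_ne_zero, by simp⟩
  | cons z L ih =>
    intro hL
    rw [List.length_cons] at hL
    obtain ⟨C, hC, hmem⟩ := ih (by omega)
    set y := (L.map fun z => f - z • (LinearMap.id : V →ₗ[ℂ] V)).foldr (fun g x => g x) (w 0)
    set n := L.length
    have hmap : ∀ r ∈ Submodule.span ℂ (w '' Set.Iio n),
        f r - z • r ∈ Submodule.span ℂ (w '' Set.Iio (n + 1)) := by
      intro r hr
      induction hr using Submodule.span_induction with
      | mem r hr =>
        obtain ⟨i, hi, rfl⟩ := hr
        have hi' : i < n := hi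
        rw [hf i (by omega)]
        have h1 : w i ∈ Submodule.span ℂ (w '' Set.Iio (n + 1)) :=
          Submodule.subset_span ⟨i, show i < n + 1 by omega, rfl⟩
        have h2 : w (i + 1) ∈ Submodule.span ℂ (w '' Set.Iio (n + 1)) :=
          Submodule.subset_span ⟨i + 1, show i + 1 < n + 1 by omega, rfl⟩
        exact Submodule.sub_mem _ (Submodule.add_mem _ (Submodule.smul_mem _ _ h1)
          (Submodule.smul_mem _ _ h2)) (Submodule.smul_mem _ _ h1)
      | zero => simp
      | add y z _ _ hy hz =>
        have := Submodule.add_mem _ hy hz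
        rw [map_add, smul_add]
        convert this using 1; abel
      | smul r y _ hy =>
        rw [map_smul, smul_comm z, ← smul_sub]
        exact Submodule.smul_mem _ _ hy
    refine ⟨C * c n, mul_ne_zero hC (hc n (by omega)), ?_⟩
    have hwn : w n ∈ Submodule.span ℂ (w '' Set.Iio (n + 1)) :=
      Submodule.subset_span ⟨n, show n < n + 1 by omega, rfl⟩
    have h := Submodule.add_mem _ (hmap _ hmem) (Submodule.smul_mem _ (C * (q n - z)) hwn)
    have heq : f y - z • y - (C * c n) • w (n + 1)
        = f (y - C • w n) - z • (y - C • w n) + (C * (q n - z)) • w n := by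
      rw [map_sub, map_smul, hf n (by omega)]
      module
    rw [← heq] at h
    exact h

/-- Bidiagonal operators with nonvanishing off-diagonal entries are nonderogatory, so they are
diagonalizable exactly when the diagonal entries are distinct. The functional `l` witnesses that
`w G` is not in the span of the other `w k`. -/
lemma diagOn_bidiagonal_iff
    (hf : ∀ k ≤ G, f (w k) = q k • w k + c k • w (k + 1)) (hcG : c G = 0)
    (hc : ∀ k < G, c k ≠ 0) (l : V →ₗ[ℂ] ℂ) (hl : ∀ k < G, l (w k) = 0) (hlG : l (w G) ≠ 0) :
    DiagOn f (Submodule.span ℂ (w '' Set.Iic G)) ↔ Set.InjOn q (Set.Iic G) := by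
  refine ⟨fun hD => ?_, diagOn_of_injOn hf hcG⟩
  by_contra hq
  simp only [Set.InjOn, not_forall] at hq
  obtain ⟨s, hs, t, ht, hst, hne⟩ := hq
  have ht' : t ≤ G := ht
  have hs' : s ≤ G := hs
  -- The diagonal entries with the repeated `q t` left out still exhaust all eigenvalues.
  set L : List ℂ := ((List.range (G + 1)).erase t).map q with hLdef
  have hlen : L.length = G := by
    rw [hLdef, List.length_map, List.length_erase_of_mem (by simp; omega)]
    simp
  have hmemL : ∀ k ≤ G, q k ∈ L := by
    intro k hk
    rw [hLdef, List.mem_map]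
    by_cases hkt : k = t
    · exact ⟨s, by rw [List.mem_erase_of_ne hne]; simp; omega, by rw [hst, hkt]⟩
    · exact ⟨k, by rw [List.mem_erase_of_ne hkt]; simp; omega, rfl⟩
  set T : List ℂ → (V →ₗ[ℂ] V) := fun L =>
    (L.map fun z => f - z • (LinearMap.id : V →ₗ[ℂ] V)).foldr (fun g h => g ∘ₗ h) LinearMap.id
    with hT
  have hTapp : ∀ L x, T L x =
      (L.map fun z => f - z • (LinearMap.id : V →ₗ[ℂ] V)).foldr (fun g x => g x) x := by
    intro L x
    induction L with
    | nil => rfl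
    | cons z L ih => simp only [hT, List.map_cons, List.foldr_cons] at ih ⊢; rw [← ih]; rfl
  have hTeig : ∀ L : List ℂ, ∀ x b, f x = b • x → T L x = (L.map fun z => b - z).prod • x := by
    intro L x b hb
    induction L with
    | nil => simp [hT]
    | cons z L ih =>
      have : T (z :: L) x = (f - z • (LinearMap.id : V →ₗ[ℂ] V)) (T L x) := rfl
      rw [this, ih, map_smul, LinearMap.sub_apply, hb]
      simp only [LinearMap.smul_apply, LinearMap.id_apply, List.map_cons, List.prod_cons]
      module
  have hker : Submodule.span ℂ (w '' Set.Iic G) ≤ LinearMap.ker (T L) := by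
    conv_lhs => rw [← hD]
    rw [Submodule.span_le]
    rintro x ⟨hx, b, hb⟩
    rw [SetLike.mem_coe, LinearMap.mem_ker]
    by_cases hx0 : x = 0
    · rw [hx0, map_zero]
    obtain ⟨k, hk, rfl⟩ := eigenvalue_mem hf hcG x hx b hb hx0
    rw [hTeig L x _ hb, List.prod_eq_zero, zero_smul]
    exact List.mem_map.2 ⟨q k, hmemL k hk, sub_self _⟩
  have h0 : T L (w 0) = 0 := hker (Submodule.subset_span ⟨0, Nat.zero_le _, rfl⟩)
  obtain ⟨C, hC, hmem⟩ := cyclic_leading hf hc L hlen.le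
  rw [← hTapp, h0, hlen] at hmem
  have hlk : Submodule.span ℂ (w '' Set.Iio G) ≤ LinearMap.ker l := by
    rw [Submodule.span_le]
    rintro _ ⟨k, hk, rfl⟩
    exact hl k hk
  have := hlk hmem
  rw [LinearMap.mem_ker] at this
  simp [hC, hlG] at this

end Bidiagonal

/-! ### The difference basis -/

section Difference

variable {V : Type*} [AddCommGroup V]

lemma fwdDiff_iter_succ' (e : ℕ → V) (k i : ℕ) :
    (fwdDiff 1)^[k + 1] e i = (fwdDiff 1)^[k] e (i + 1) - (fwdDiff 1)^[k] e i := by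
  rw [Function.iterate_succ_apply']; rfl

variable [Module ℂ V]

/-- Iterated differences of `e` obey the same three-term relation as `e` itself, with the
parameters `g`, `b` lowered by the order of the difference. With
`e i = s^(g-i) t^i x^(a+i) y^(b-i)`, this says that multiplication by the invariant
`x t - y s` commutes with the Casimir operator. -/
lemma fwdDiff_three_term {f : V →ₗ[ℂ] V} {e : ℕ → V} {G : ℕ} {K a b : ℂ}
    (he : ∀ i ≤ G, f (e i) = (-(K + i * (G - i + 1) + (b - i) * (a + i + 1))) • e i
      + (-(i * (a + i))) • e (i - 1) + (-((b - i) * (G - i))) • e (i + 1)) (k : ℕ) :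
    ∀ i, k + i ≤ G → f ((fwdDiff 1)^[k] e i) =
      (-(K + i * (G - k - i + 1) + (b - k - i) * (a + i + 1))) • (fwdDiff 1)^[k] e i
      + (-(i * (a + i))) • (fwdDiff 1)^[k] e (i - 1)
      + (-((b - k - i) * (G - k - i))) • (fwdDiff 1)^[k] e (i + 1) := by
  induction k with
  | zero =>
    intro i hi
    simpa using he i (by omega)
  | succ k ih =>
    intro i hi
    rw [fwdDiff_iter_succ', map_sub, ih (i + 1) (by omega), ih i (by omega)]
    rcases i with _ | i
    · simp only [fwdDiff_iter_succ', Nat.zero_add, Nat.cast_zero, Nat.sub_self, Nat.cast_add,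
        Nat.cast_one, Nat.zero_sub]
      module
    · simp only [fwdDiff_iter_succ', Nat.add_sub_cancel, Nat.cast_add, Nat.cast_one]
      module

/-- The vectors `Δ^k e 0` have the same span as the `e k`. -/
lemma span_fwdDiff (e : ℕ → V) (G : ℕ) :
    Submodule.span ℂ ((fun k => (fwdDiff 1)^[k] e 0) '' Set.Iic G)
      = Submodule.span ℂ (e '' Set.Iic G) := by
  apply le_antisymm
  · have : ∀ k i, k + i ≤ G → (fwdDiff 1)^[k] e i ∈ Submodule.span ℂ (e '' Set.Iic G) := by
      intro k
      induction k with
      | zero => intro i hi; exact Submodule.subset_span ⟨i, show i ≤ G by omega, rfl⟩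
      | succ k ih =>
        intro i hi
        rw [fwdDiff_iter_succ']
        exact Submodule.sub_mem _ (ih _ (by omega)) (ih _ (by omega))
    rw [Submodule.span_le]
    rintro _ ⟨k, hk, rfl⟩
    exact this k 0 hk
  · have : ∀ i k, k + i ≤ G → (fwdDiff 1)^[k] e i ∈
        Submodule.span ℂ ((fun k => (fwdDiff 1)^[k] e 0) '' Set.Iic G) := by
      intro i
      induction i with
      | zero => intro k hk; exact Submodule.subset_span ⟨k, hk, rfl⟩
      | succ i ih =>
        intro k hk
        have h := Submodule.add_mem _ (ih (k + 1) (by omega)) (ih k (by omega))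
        rw [fwdDiff_iter_succ'] at h
        simpa using h
    rw [Submodule.span_le]
    rintro _ ⟨k, hk, rfl⟩
    exact this k 0 (by have : k ≤ G := hk; omega)

lemma apply_fwdDiff (l : V →ₗ[ℂ] ℂ) (e : ℕ → V) (G : ℕ) (hl : ∀ k < G, l (e k) = 0) (k : ℕ) :
    ∀ i, k + i ≤ G → l ((fwdDiff 1)^[k] e i) = l (e (k + i)) := by
  induction k with
  | zero => intro i _; simp
  | succ k ih =>
    intro i hi
    rw [fwdDiff_iter_succ', map_sub, ih _ (by omega), ih _ (by omega), hl (k + i) (by omega),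
      sub_zero]
    congr 2; omega

/-- A three-term operator of the Casimir shape is bidiagonal on the difference basis. -/
lemma diagOn_three_term_iff {f : V →ₗ[ℂ] V} {e : ℕ → V} {G : ℕ} {K a b : ℂ}
    (he : ∀ i ≤ G, f (e i) = (-(K + i * (G - i + 1) + (b - i) * (a + i + 1))) • e i
      + (-(i * (a + i))) • e (i - 1) + (-((b - i) * (G - i))) • e (i + 1))
    (hb : ∀ i : ℕ, b - i ≠ 0)
    (l : V →ₗ[ℂ] ℂ) (hl : ∀ k < G, l (e k) = 0) (hlG : l (e G) ≠ 0) :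
    DiagOn f (Submodule.span ℂ (e '' Set.Iic G)) ↔
      Set.InjOn (fun k : ℕ => -(K + (b - k) * (a + 1) + (b - k) * (G - k))) (Set.Iic G) := by
  rw [← span_fwdDiff]
  refine diagOn_bidiagonal_iff (c := fun k : ℕ => -((b - k) * (G - k))) ?_ (by simp) ?_ l ?_ ?_
  · intro k hk
    have h := fwdDiff_three_term he k 0 (by omega)
    have h1 : (fwdDiff 1)^[k] e (0 + 1) = (fwdDiff 1)^[k + 1] e 0 + (fwdDiff 1)^[k] e 0 := by
      rw [fwdDiff_iter_succ']; abel
    rw [h1] at h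
    simp only [h, Nat.cast_zero]
    module
  · intro k hk
    refine neg_ne_zero.2 (mul_ne_zero (hb k) (sub_ne_zero.2 ?_))
    exact_mod_cast hk.ne'
  · intro k hk
    rw [apply_fwdDiff l e G hl k 0 (by omega)]
    exact hl k hk
  · rw [apply_fwdDiff l e G hl G 0 (by omega)]
    exact hlG

end Difference

/-! ### The Casimir operator on basis vectors -/

lemma csqrt_mul_self (z : ℂ) : csqrt z * csqrt z = z := by
  rw [csqrt, ← pow_two, one_div]
  exact_mod_cast Complex.cpow_nat_inv_pow z two_ne_zero

lemma csqrt_zero : csqrt 0 = 0 := by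
  rw [csqrt, Complex.zero_cpow (by norm_num)]

lemma Cp_mul_Cm (j m m' : ℂ) (h : m' = m + 1) : Cp j m * Cm j m' = -((j - m) * (j + m + 1)) := by
  subst h
  have h1 := csqrt_mul_self (j - m)
  have h2 := csqrt_mul_self (j + m + 1)
  rw [Cp, Cm, show j - (m + 1) + 1 = j - m by ring, ← add_assoc]
  linear_combination (csqrt (j - m) * csqrt (j - m)) * (csqrt (j + m + 1) * csqrt (j + m + 1))
    * Complex.I_mul_I - csqrt (j + m + 1) * csqrt (j + m + 1) * h1 - (j - m) * h2

/-- The basis vector with `F_γ`-index `i`, zero when `i` is out of range. -/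
def eV (G : ℕ) (i z : ℤ) : Wc G := eVc G i z 1

lemma eVc_eq_smul (G : ℕ) (i z : ℤ) (c : ℂ) : eVc G i z c = c • eV G i z := by
  unfold eV eVc
  split_ifs <;> simp

lemma eV_of_fin (G : ℕ) (ν : Fin (G + 1)) (z : ℤ) :
    eV G ((ν : ℕ) : ℤ) z = Finsupp.single (ν, z) 1 := by
  unfold eV eVc
  rw [dif_pos (by omega)]
  simp

lemma single_eq_eV (G : ℕ) (ν : Fin (G + 1)) (z : ℤ) (c : ℂ) :
    (Finsupp.single (ν, z) c : Wc G) = c • eV G ((ν : ℕ) : ℤ) z := by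
  rw [eV_of_fin]; simp

lemma eV_zero (G : ℕ) (i z : ℤ) (h : ¬ (0 ≤ i ∧ i < (G : ℤ) + 1)) : eV G i z = 0 := by
  unfold eV eVc
  rw [dif_neg h]

lemma J0c_eV (G : ℕ) (E : ℂ) (i z : ℤ) :
    J0c G E (eV G i z) = ((i : ℂ) - gam G + (E + z)) • eV G i z := by
  by_cases h : 0 ≤ i ∧ i < (G : ℤ) + 1
  · obtain ⟨ν, rfl⟩ : ∃ ν : Fin (G + 1), i = ((ν : ℕ) : ℤ) :=
      ⟨⟨i.toNat, by omega⟩, by simp [h.1]⟩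
    rw [eV_of_fin]
    simp [J0c, muc, mcont]
  · simp [eV_zero _ _ _ h]

/-- Valid for every integer `i`: at `i = -1` the coefficient `Cp` vanishes. -/
lemma Jpc_eV (G : ℕ) (j E : ℂ) (i z : ℤ) :
    Jpc G j E (eV G i z) = Cp (gam G) (i - gam G) • eV G (i + 1) z
      + Cp j (E + z) • eV G i (z + 1) := by
  by_cases h : 0 ≤ i ∧ i < (G : ℤ) + 1
  · obtain ⟨ν, rfl⟩ : ∃ ν : Fin (G + 1), i = ((ν : ℕ) : ℤ) :=
      ⟨⟨i.toNat, by omega⟩, by simp [h.1]⟩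
    rw [eV_of_fin, ← single_eq_eV, ← eVc_eq_smul]
    simp [Jpc, muc, mcont]
  · rw [eV_zero _ _ _ h, eV_zero _ _ (z + 1) h, map_zero, smul_zero, add_zero]
    by_cases h1 : i = -1
    · have : Cp (gam G) (i - gam G) = 0 := by
        subst h1
        rw [Cp, show gam G + (((-1 : ℤ) : ℂ) - gam G) + 1 = 0 by push_cast; ring, csqrt_zero,
          mul_zero]
      rw [this, zero_smul]
    · rw [eV_zero _ _ _ (by omega), smul_zero]

/-- Valid for every integer `i`: at `i = G + 1` the coefficient `Cm` vanishes. -/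
lemma Jmc_eV (G : ℕ) (j E : ℂ) (i z : ℤ) :
    Jmc G j E (eV G i z) = Cm (gam G) (i - gam G) • eV G (i - 1) z
      + Cm j (E + z) • eV G i (z - 1) := by
  by_cases h : 0 ≤ i ∧ i < (G : ℤ) + 1
  · obtain ⟨ν, rfl⟩ : ∃ ν : Fin (G + 1), i = ((ν : ℕ) : ℤ) :=
      ⟨⟨i.toNat, by omega⟩, by simp [h.1]⟩
    rw [eV_of_fin, ← single_eq_eV, ← eVc_eq_smul]
    simp [Jmc, muc, mcont]
  · rw [eV_zero _ _ _ h, eV_zero _ _ (z - 1) h, map_zero, smul_zero, add_zero]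
    by_cases h1 : i = G + 1
    · have : Cm (gam G) (i - gam G) = 0 := by
        subst h1
        rw [Cm, show gam G - (((G + 1 : ℤ) : ℂ) - gam G) + 1 = 0 by
          rw [gam]; push_cast; ring, csqrt_zero, mul_zero]
      rw [this, zero_smul]
    · rw [eV_zero _ _ _ (by omega), smul_zero]

/-- The action of the Casimir on `|γ, γ-i⟩ ⊗ |j, ε+M₀+i⟩`. -/
lemma Qc_eV (G : ℕ) (j E : ℂ) (M₀ i : ℤ) :
    Qc G j E (eV G (G - i) (M₀ + i)) =
      (-((E + gam G + M₀) * (E + gam G + M₀ + 1) + i * (G - i + 1)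
          + (j - E - M₀ - i) * (j + E + M₀ + i + 1))) • eV G (G - i) (M₀ + i)
      + (Cp (gam G) (gam G - i) * Cm j (E + M₀ + i)) • eV G (G - (i - 1)) (M₀ + (i - 1))
      + (Cp j (E + M₀ + i) * Cm (gam G) (gam G - i)) • eV G (G - (i + 1)) (M₀ + (i + 1)) := by
  have hg : (G : ℂ) = 2 * gam G := by rw [gam]; ring
  have h1 : Cp (gam G) (gam G - i) * Cm (gam G) (gam G - i + 1) = -(i * (G - i + 1)) := by
    rw [Cp_mul_Cm _ _ _ rfl, hg]; ring
  have h2 : Cp j (E + M₀ + i) * Cm j (E + M₀ + i + 1)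
      = -((j - E - M₀ - i) * (j + E + M₀ + i + 1)) := by
    rw [Cp_mul_Cm _ _ _ rfl]; ring
  simp only [Qc, LinearMap.add_apply, LinearMap.neg_apply, LinearMap.comp_apply,
    LinearMap.id_apply, J0c_eV, Jpc_eV, map_add, map_smul, Jmc_eV]
  push_cast
  rw [show (G : ℂ) - i - gam G = gam G - i by rw [hg]; ring,
    show (G : ℂ) - i + 1 - gam G = gam G - i + 1 by rw [hg]; ring,
    show E + ((M₀ : ℂ) + i) = E + M₀ + i by ring,
    show E + ((M₀ : ℂ) + i + 1) = E + M₀ + i + 1 by ring,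
    show (G : ℤ) - i + 1 - 1 = G - i by ring, show M₀ + i + 1 - 1 = M₀ + i by ring,
    show (G : ℤ) - (i - 1) = G - i + 1 by ring, show M₀ + (i - 1) = M₀ + i - 1 by ring,
    show (G : ℤ) - (i + 1) = G - i - 1 by ring, show M₀ + (i + 1) = M₀ + i + 1 by ring]
  rw [show ∀ A B C : ℂ, -(A + B + C) = -A + -B + -C by intros; ring, ← h1, ← h2]
  module

/-! ### The weight spaces -/

lemma eV_mem_VMc (G : ℕ) (M₀ i : ℤ) : eV G (G - i) (M₀ + i) ∈ VMc G M₀ := by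
  by_cases h : 0 ≤ (G : ℤ) - i ∧ (G : ℤ) - i < (G : ℤ) + 1
  · refine Submodule.subset_span ⟨⟨((G : ℤ) - i).toNat, by omega⟩, ?_⟩
    rw [← eV_of_fin]
    congr 1 <;> simp <;> omega
  · rw [eV_zero _ _ _ h]; exact Submodule.zero_mem _

lemma VMc_eq_span (G : ℕ) (M₀ : ℤ) (d : ℕ → ℂ) (hd : ∀ i ≤ G, d i ≠ 0) :
    VMc G M₀ = Submodule.span ℂ ((fun i : ℕ => d i • eV G (G - i) (M₀ + i)) '' Set.Iic G) := by
  apply le_antisymm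
  · refine Submodule.span_le.2 ?_
    rintro _ ⟨ν, rfl⟩
    have hν : (ν : ℕ) ≤ G := by omega
    rw [SetLike.mem_coe, ← Submodule.smul_mem_iff _ (hd (G - ν) (by omega))]
    refine Submodule.subset_span ⟨G - ν, show G - (ν : ℕ) ≤ G by omega, ?_⟩
    simp only [← eV_of_fin]
    congr 2 <;> omega
  · refine Submodule.span_le.2 ?_
    rintro _ ⟨i, _, rfl⟩
    exact Submodule.smul_mem _ _ (eV_mem_VMc G M₀ i)

lemma Qc_mem_VMc (G : ℕ) (j E : ℂ) (M₀ : ℤ) (x : Wc G) (hx : x ∈ VMc G M₀) :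
    Qc G j E x ∈ VMc G M₀ := by
  have h : VMc G M₀ ≤ (VMc G M₀).comap (Qc G j E) := by
    refine Submodule.span_le.2 ?_
    rintro _ ⟨ν, rfl⟩
    have := Qc_eV G j E M₀ (G - ((ν : ℕ) : ℤ))
    rw [show (G : ℤ) - (G - ((ν : ℕ) : ℤ)) = ((ν : ℕ) : ℤ) by ring, eV_of_fin,
      show M₀ + (G - ((ν : ℕ) : ℤ)) = G + M₀ - ((ν : ℕ) : ℤ) by ring] at this
    rw [SetLike.mem_coe, Submodule.mem_comap, this]
    refine Submodule.add_mem _ (Submodule.add_mem _ (Submodule.smul_mem _ _ ?_)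
      (Submodule.smul_mem _ _ (eV_mem_VMc _ _ _))) (Submodule.smul_mem _ _ (eV_mem_VMc _ _ _))
    exact Submodule.subset_span ⟨ν, rfl⟩
  exact h hx

/-- The projection of `F_γ ⊗ C^ε_j` onto the weight space `V_M`. -/
def projV (G : ℕ) (M₀ : ℤ) : Wc G →ₗ[ℂ] Wc G :=
  Finsupp.lsum ℂ fun p => LinearMap.toSpanSingleton ℂ (Wc G)
    (if p.2 = (G : ℤ) + M₀ - (p.1 : ℕ) then Finsupp.single p 1 else 0)

lemma projV_single (G : ℕ) (M₀ : ℤ) (p : Fin (G + 1) × ℤ) :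
    projV G M₀ (Finsupp.single p 1)
      = if p.2 = (G : ℤ) + M₀ - (p.1 : ℕ) then Finsupp.single p 1 else 0 := by
  simp [projV]

lemma projV_mem (G : ℕ) (M₀ M₁ : ℤ) (x : Wc G) (hx : x ∈ VMc G M₁) :
    projV G M₀ x = if M₁ = M₀ then x else 0 := by
  induction hx using Submodule.span_induction with
  | mem x hx =>
    obtain ⟨ν, rfl⟩ := hx
    rw [projV_single]
    by_cases h : M₁ = M₀
    · simp [h]
    · rw [if_neg h, if_neg]; simpa using h
  | zero => simp
  | add x y _ _ hx hy => rw [map_add, hx, hy]; split_ifs <;> simp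
  | smul r x _ hx => rw [map_smul, hx]; split_ifs <;> simp

lemma single_mem_VMc (G : ℕ) (p : Fin (G + 1) × ℤ) :
    (Finsupp.single p 1 : Wc G) ∈ VMc G (p.2 + (p.1 : ℕ) - G) := by
  refine Submodule.subset_span ⟨p.1, ?_⟩
  congr 1
  ext <;> simp

lemma projV_range (G : ℕ) (M₀ : ℤ) (x : Wc G) : projV G M₀ x ∈ VMc G M₀ := by
  induction x using Finsupp.induction_linear with
  | zero => simp
  | add x y hx hy => rw [map_add]; exact Submodule.add_mem _ hx hy
  | single p r =>
    rw [← mul_one r, ← smul_eq_mul, ← Finsupp.smul_single, map_smul]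
    refine Submodule.smul_mem _ _ ?_
    rw [projV_mem _ _ _ _ (single_mem_VMc G p)]
    split_ifs with h
    · exact h ▸ single_mem_VMc G p
    · exact Submodule.zero_mem _

lemma projV_comm (G : ℕ) (j E : ℂ) (M₀ : ℤ) (x : Wc G) :
    projV G M₀ (Qc G j E x) = Qc G j E (projV G M₀ x) := by
  induction x using Finsupp.induction_linear with
  | zero => simp
  | add x y hx hy => simp only [map_add, hx, hy]
  | single p r =>
    rw [← mul_one r, ← smul_eq_mul, ← Finsupp.smul_single]
    simp only [map_smul]
    rw [projV_mem _ _ _ _ (single_mem_VMc G p),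
      projV_mem _ _ _ _ (Qc_mem_VMc G j E _ _ (single_mem_VMc G p))]
    split_ifs <;> simp

lemma diagOn_top_iff (G : ℕ) (j E : ℂ) :
    DiagOn (Qc G j E) (⊤ : Submodule ℂ (Wc G)) ↔ ∀ M₀, DiagOn (Qc G j E) (VMc G M₀) := by
  constructor
  · intro h M₀
    refine le_antisymm (Submodule.span_le.2 fun x hx => hx.1) ?_
    intro x hx
    have hle : (⊤ : Submodule ℂ (Wc G)) ≤ (Submodule.span ℂ
        {w : Wc G | w ∈ VMc G M₀ ∧ ∃ c : ℂ, Qc G j E w = c • w}).comap (projV G M₀) := by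
      conv_lhs => rw [← h]
      refine Submodule.span_le.2 ?_
      rintro y ⟨_, c, hc⟩
      refine Submodule.subset_span ⟨projV_range _ _ _, c, ?_⟩
      rw [← projV_comm, hc, map_smul]
    have := hle (Submodule.mem_top : x ∈ ⊤)
    rwa [Submodule.mem_comap, projV_mem _ _ _ _ hx, if_pos rfl] at this
  · intro h
    refine le_antisymm le_top ?_
    intro x _
    induction x using Finsupp.induction_linear with
    | zero => exact Submodule.zero_mem _
    | add x y hx hy => exact Submodule.add_mem _ (hx trivial) (hy trivial)
    | single p r =>
      rw [← mul_one r, ← smul_eq_mul, ← Finsupp.smul_single]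
      refine Submodule.smul_mem _ _ ?_
      have := single_mem_VMc G p
      rw [← h] at this
      refine Submodule.span_mono ?_ this
      rintro w ⟨_, hw⟩
      exact ⟨trivial, hw⟩

/-! ### Diagonalizability on a weight space -/

/-- Rescaling factors turning the square-root coefficients of the Casimir into polynomial ones;
the vector `|γ, γ-i⟩ ⊗ |j, ε+M₀+i⟩` times the `i`-th factor plays the role of `s^(2γ-i) t^i x^(j+ε+M₀+i) y^(j-ε-M₀-i)`. -/
def gaugeFactor (G : ℕ) (j E : ℂ) (M₀ : ℤ) : ℕ → ℂ
  | 0 => 1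
  | i + 1 => gaugeFactor G j E M₀ i * (Cp j (E + M₀ + i) * Cm (gam G) (gam G - i))
      / (-((j - E - M₀ - i) * (G - i)))

lemma diagOn_VMc_iff (G : ℕ) (j E : ℂ) (M₀ : ℤ) (h1 : ∀ n : ℤ, j - E ≠ n)
    (h2 : ∀ n : ℤ, j + E ≠ n) :
    DiagOn (Qc G j E) (VMc G M₀) ↔
      Set.InjOn (fun k : ℕ => -((j + gam G - k) * (j + gam G - k + 1))) (Set.Iic G) := by
  have hg : (G : ℂ) = 2 * gam G := by rw [gam]; ring
  have hb : ∀ i : ℕ, j - E - M₀ - i ≠ 0 := fun i h => h1 (M₀ + i) (by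
    push_cast; linear_combination h)
  have ha : ∀ i : ℕ, j + E + M₀ + i + 1 ≠ 0 := fun i h => h2 (-(M₀ + i + 1)) (by
    push_cast; linear_combination h)
  have hG : ∀ i : ℕ, i < G → (G : ℂ) - i ≠ 0 := fun i hi => sub_ne_zero.2 (by exact_mod_cast hi.ne')
  have hj : ∀ i : ℕ, Cp j (E + M₀ + i) * Cm j (E + M₀ + i + 1)
      = -((j - E - M₀ - i) * (j + E + M₀ + i + 1)) := fun i => by
    rw [Cp_mul_Cm _ _ _ rfl]; ring
  have hγ : ∀ i : ℕ, Cp (gam G) (gam G - (i + 1)) * Cm (gam G) (gam G - i)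
      = -((i + 1) * (G - i)) := fun i => by
    rw [Cp_mul_Cm _ _ _ (by ring), hg]; ring
  set d := gaugeFactor G j E M₀ with hd
  have hup : ∀ i < G, d i * (Cp j (E + M₀ + i) * Cm (gam G) (gam G - i))
      = -((j - E - M₀ - i) * (G - i)) * d (i + 1) := by
    intro i hi
    have := mul_ne_zero (hb i) (hG i hi)
    rw [hd, gaugeFactor, mul_div_cancel₀ _ (neg_ne_zero.2 this)]
  have hd0 : ∀ i ≤ G, d i ≠ 0 := by
    intro i
    induction i with
    | zero => intro _; exact one_ne_zero
    | succ i ih =>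
      intro hi h0
      have h := hup i hi
      rw [h0, mul_zero] at h
      have hi1 : ((i : ℂ) + 1) ≠ 0 := by exact_mod_cast i.succ_ne_zero
      rcases mul_eq_zero.1 h with h | h
      · exact ih (by omega) h
      · rcases mul_eq_zero.1 h with h | h
        · have := hj i
          rw [h, zero_mul] at this
          exact mul_ne_zero (hb i) (ha i) (by linear_combination this)
        · have := hγ i
          rw [h, mul_zero] at this
          exact mul_ne_zero hi1 (hG i hi) (by linear_combination this)
  have hdown : ∀ i < G, d (i + 1) * (Cp (gam G) (gam G - (i + 1)) * Cm j (E + M₀ + i + 1))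
      = -((i + 1) * (j + E + M₀ + i + 1)) * d i := by
    intro i hi
    apply mul_left_cancel₀ (mul_ne_zero (hb i) (hG i hi))
    linear_combination Cp (gam G) (gam G - (i + 1)) * Cm j (E + M₀ + i + 1) * hup i hi
      - d i * Cp (gam G) (gam G - (i + 1)) * Cm (gam G) (gam G - i) * hj i
      + d i * (j - E - M₀ - i) * (j + E + M₀ + i + 1) * hγ i
  rw [VMc_eq_span G M₀ d hd0]
  -- The functional reading off the coefficient of `|γ, -γ⟩ ⊗ |j, ε+M₀+2γ⟩`.
  rw [diagOn_three_term_iff (K := (E + gam G + M₀) * (E + gam G + M₀ + 1)) (a := j + E + M₀)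
    (b := j - E - M₀) ?_ hb (Finsupp.lapply ((0 : Fin (G + 1)), M₀ + G)) ?_ ?_]
  · have : (fun k : ℕ => -((E + gam G + M₀) * (E + gam G + M₀ + 1)
        + (j - E - M₀ - k) * (j + E + M₀ + 1) + (j - E - M₀ - k) * (G - k)))
        = fun k : ℕ => -((j + gam G - k) * (j + gam G - k + 1)) := by
      funext k; rw [hg]; ring
    rw [this]
  · intro i hi
    have hQ := Qc_eV G j E M₀ i
    simp only [map_smul, hQ, smul_add, smul_smul]
    push_cast
    congr 1
    · congr 1
      · congr 1; ring
      · rcases i with _ | i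
        · simp [Cp, csqrt_zero]
        · have := hdown i (by omega)
          push_cast
          rw [show E + M₀ + ((i : ℂ) + 1) = E + M₀ + i + 1 by ring, this]
          simp only [add_sub_cancel_right]
          congr 1; ring
    · rcases eq_or_lt_of_le hi with rfl | hi
      · rw [eV_zero _ _ _ (by omega)]; simp
      · have := hup i hi
        rw [this]
  · intro k hk
    have : eV G (G - k) (M₀ + k)
        = Finsupp.single ((⟨G - k, by omega⟩ : Fin (G + 1)), M₀ + (k : ℤ)) 1 := by
      rw [← eV_of_fin]; congr 1; simp; omega
    rw [this, map_smul, Finsupp.lapply_apply, Finsupp.single_apply, if_neg, smul_zero]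
    intro h
    have := congrArg Prod.snd h
    simp at this
    omega
  · have : eV G (G - G) (M₀ + G) = Finsupp.single ((0 : Fin (G + 1)), M₀ + (G : ℤ)) 1 := by
      rw [← eV_of_fin]; simp
    rw [this, map_smul, Finsupp.lapply_apply, Finsupp.single_apply, if_pos rfl, smul_eq_mul,
      mul_one]
    exact hd0 G le_rfl

/-- The numbers `-(j+γ-k)(j+γ-k+1)` for two distinct indices `k` agree exactly when these indices
add up to `2j + 2γ + 1`. -/
lemma injOn_iff (G : ℕ) (hG : 1 ≤ G) (jr : ℝ) (n : ℤ) (hn : 2 * jr = n) :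
    Set.InjOn (fun k : ℕ => -(((jr : ℂ) + gam G - k) * ((jr : ℂ) + gam G - k + 1))) (Set.Iic G) ↔
      (jr > (G : ℝ) / 2 - 1 ∨ jr < -((G : ℝ) / 2)) := by
  have hnC : 2 * (jr : ℂ) = n := by exact_mod_cast hn
  have hg : (G : ℂ) = 2 * gam G := by rw [gam]; ring
  have hR : (jr > (G : ℝ) / 2 - 1 ∨ jr < -((G : ℝ) / 2)) ↔ ((G : ℤ) - 2 < n ∨ n < -G) := by
    refine or_congr ?_ ?_
    · rw [← Int.cast_lt (R := ℝ)]; push_cast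
      constructor <;> intro h <;> linarith
    · rw [← Int.cast_lt (R := ℝ)]; push_cast
      constructor <;> intro h <;> linarith
  rw [hR]
  have key : ∀ k k' : ℕ, -(((jr : ℂ) + gam G - k) * ((jr : ℂ) + gam G - k + 1))
      = -(((jr : ℂ) + gam G - k') * ((jr : ℂ) + gam G - k' + 1)) ↔
        (k = k' ∨ (k : ℤ) + k' = n + G + 1) := by
    intro k k'
    rw [← @Nat.cast_inj ℂ, ← @Int.cast_inj ℂ, ← sub_eq_zero (a := (k : ℂ)),
      ← sub_eq_zero (a := (((k : ℤ) + k' : ℤ) : ℂ)), ← mul_eq_zero, ← sub_eq_zero]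
    push_cast
    have : -(((jr : ℂ) + gam G - k) * ((jr : ℂ) + gam G - k + 1))
      - -(((jr : ℂ) + gam G - k') * ((jr : ℂ) + gam G - k' + 1))
      = -(((k : ℂ) - k') * (k + k' - (n + G + 1))) := by
      rw [← hnC, hg]; ring
    rw [this, neg_eq_zero]
  constructor
  · intro h
    by_contra! hcon
    obtain ⟨N, hN⟩ : ∃ N : ℕ, (N : ℤ) = n + G + 1 := ⟨(n + G + 1).toNat, by omega⟩
    rcases le_or_gt N G with hNG | hNG
    · have := h (show 0 ≤ G by omega) (show N ≤ G from hNG) ((key _ _).2 (Or.inr (by simpa using hN)))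
      omega
    · have := h (show N - G ≤ G by omega) (show G ≤ G from le_rfl) ((key _ _).2 (Or.inr (by omega)))
      omega
  · intro h k hk k' hk' heq
    have hk1 : k ≤ G := hk
    have hk2 : k' ≤ G := hk'
    rcases (key k k').1 heq with h' | h' <;> omega

/-- For real j with 2j ∈ ℤ and j - ε ∉ ℤ, the restriction of 𝒬 to each V_M
is diagonalizable iff j > γ - 1 or j < -γ; consequently 𝒬 is diagonalizable on F_γ ⊗ C^ε_j
iff j > γ - 1 or j < -γ. -/
theorem Qc_diagonalizable_iff_half_integer (G : ℕ) (hG : 1 ≤ G) (Er jr : ℝ)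
    (hE : Er = 0 ∨ Er = 1 / 2)
    (hjZ : ∃ n : ℤ, 2 * jr = (n : ℝ)) (hje : ¬ ∃ n : ℤ, jr - Er = (n : ℝ)) :
    (∀ M₀ : ℤ,
      DiagOn (Qc G (jr : ℂ) (Er : ℂ)) (VMc G M₀) ↔
        (jr > (G : ℝ) / 2 - 1 ∨ jr < -((G : ℝ) / 2))) ∧
    (DiagOn (Qc G (jr : ℂ) (Er : ℂ)) (⊤ : Submodule ℂ (Wc G)) ↔
      (jr > (G : ℝ) / 2 - 1 ∨ jr < -((G : ℝ) / 2))) := by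
  obtain ⟨n, hn⟩ := hjZ
  have h1 : ∀ n : ℤ, (jr : ℂ) - Er ≠ n := fun m hm => hje ⟨m, by exact_mod_cast hm⟩
  have h2 : ∀ n : ℤ, (jr : ℂ) + Er ≠ n := by
    intro m hm
    have hm' : jr + Er = m := by exact_mod_cast hm
    rcases hE with rfl | rfl
    · exact hje ⟨m, by linarith⟩
    · exact hje ⟨m - 1, by push_cast; linarith⟩
  have hV : ∀ M₀ : ℤ, DiagOn (Qc G (jr : ℂ) (Er : ℂ)) (VMc G M₀) ↔
      (jr > (G : ℝ) / 2 - 1 ∨ jr < -((G : ℝ) / 2)) := fun M₀ => by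
    rw [diagOn_VMc_iff G _ _ M₀ h1 h2, injOn_iff G hG jr n hn]
  refine ⟨hV, ?_⟩
  rw [diagOn_top_iff]
  exact ⟨fun h => (hV 0).1 (h 0), fun h M₀ => (hV M₀).2 h⟩

end
end

section
/- Wigner–Eckart theorem for sl(2,ℝ): let ρ_j and ρ_{j'} be standard-basis representations with labels j, j' and weight sets M_j, M_{j'}, let T be a tensor operator of rank γ from V_j to V_{j'}, and suppose there exists Clebsch–Gordan data for the coupling F_γ ⊗ ρ_j such that the values J(J+1), J ∈ D(γ,j), are pairwise distinct, J(J+1) ≠ j'(j'+1) for every J ∈ D(γ,j) with J ≠ j', and M_J = M_{j'} when J = j' ∈ D(γ,j). Then there exists a constant c ∈ ℂ (the reduced matrix element) such that for all μ ∈ {−γ, …, γ}, m ∈ M_j and m' ∈ M_{j'}, the coefficient of |j',m'⟩ in the basis expansion of T_μ|j,m⟩ equals c · B(j',m'|γ,μ;j,m), where B(j',m'|γ,μ;j,m) := 0 if j' ∉ D(γ,j). In particular, if j' ∉ D(γ,j) then T_μ = 0 for all μ. -/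
/-!
Standard-basis representations of sl(2,ℝ), tensor operators, and Clebsch–Gordan data.

A standard-basis representation with label j and weight set S ⊆ ℂ is modelled on the space
`↥S →₀ ℂ`, with basis vector `single ⟨m,hm⟩ 1` representing |j,m⟩. Tensor operators of rank
γ = G/2 are indexed by z : ℤ (with μ = z - γ for z ∈ {0,...,G}), vanishing out of range.
-/

/-!
The Clebsch–Gordan coefficients `A` assemble the vectors `T_μ|j,m⟩` into the combinations
`t_J(M) = ∑_μ A(γ,μ;j,M-μ|J,M) T_μ|j,M-μ⟩`. The recursion relations for `A` and the tensor
operator relations together say that `|J,M⟩ ↦ t_J(M)` intertwines `V_J` with `V_{j'}`. Since `T_μ`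
raises the weight by `μ`, only the coefficient of `|j',M⟩` in `t_J(M)` matters; it is the scalar
`redCoef`, and the intertwining property becomes `C_±(J,M) t(M±1) = C_±(j',M) t(M)`
(`redCoef_Cp`, `redCoef_Cm`).

Applying `C₊` and then `C₋` compares Casimir values: `J(J+1) t(M) = j'(j'+1) t(M)`, so `t = 0` unless
`J(J+1) = j'(j'+1)`, which by hypothesis forces `J = j'` (`redCoef_casimir`). For `J = j'` the
relation reads `C₊(j',M) (t(M+1) - t(M)) = 0`; as `C₊` does not vanish inside a weight set
(`Cp_ne_zero`) and weight sets are strings of consecutive weights, `t` is a constant `c` on `M_{j'}`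
(`const_of_step`). The orthogonality relations invert the definition of `t_J`:
`⟨j',M|T_μ|j,m⟩ = ∑_J B(J,M|γ,μ;j,m) t_J(M)` (`tcoef_eq_sum`), and only `J = j'` survives.
-/

noncomputable section

/-- `S` is a standard weight set for the label `j`: finite-dimensional, positive discrete,
negative discrete, or continuous class. -/
def IsStdWeightSet (j : ℂ) (S : Set ℂ) : Prop :=
  (∃ n : ℕ, 2 * j = (n : ℂ) ∧ S = {m : ℂ | ∃ z : ℕ, z ≤ n ∧ m = -j + (z : ℂ)}) ∨
  (∃ n : ℕ, 2 * j = (n : ℂ) - 1 ∧ S = {m : ℂ | ∃ z : ℕ, m = j + 1 + (z : ℂ)}) ∨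
  (∃ n : ℕ, 2 * j = (n : ℂ) - 1 ∧ S = {m : ℂ | ∃ z : ℕ, m = -j - 1 - (z : ℂ)}) ∨
  (∃ ε : ℂ, (ε = 0 ∨ ε = 1 / 2) ∧ S = {m : ℂ | ∃ z : ℤ, m = ε + (z : ℂ)} ∧
    ((∃ n : ℤ, 2 * j = (n : ℂ)) → ¬ ∃ n : ℤ, j - ε = (n : ℂ)))

/-- The representation space V_j attached to a weight set S. -/
abbrev RepSp (S : Set ℂ) := ↥S →₀ ℂ

/-- The basis vector |j,m⟩ scaled by c, with m ∉ S giving 0. -/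
def bvec (S : Set ℂ) (m : ℂ) (c : ℂ) : RepSp S :=
  haveI := Classical.dec (m ∈ S)
  if h : m ∈ S then Finsupp.single (⟨m, h⟩ : ↥S) c else 0

/-- J₀ |j,m⟩ = m |j,m⟩. -/
def repJ0 (S : Set ℂ) : RepSp S →ₗ[ℂ] RepSp S :=
  Finsupp.lsum ℂ fun m => LinearMap.toSpanSingleton ℂ (RepSp S)
    (Finsupp.single m (m : ℂ))

/-- J₊ |j,m⟩ = C₊(j,m) |j,m+1⟩ (zero if m+1 ∉ S). -/
def repJp (j : ℂ) (S : Set ℂ) : RepSp S →ₗ[ℂ] RepSp S :=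
  Finsupp.lsum ℂ fun m => LinearMap.toSpanSingleton ℂ (RepSp S)
    (bvec S ((m : ℂ) + 1) (Cp j (m : ℂ)))

/-- J₋ |j,m⟩ = C₋(j,m) |j,m-1⟩ (zero if m-1 ∉ S). -/
def repJm (j : ℂ) (S : Set ℂ) : RepSp S →ₗ[ℂ] RepSp S :=
  Finsupp.lsum ℂ fun m => LinearMap.toSpanSingleton ℂ (RepSp S)
    (bvec S ((m : ℂ) - 1) (Cm j (m : ℂ)))

/-- A tensor operator of rank γ = G/2 from the representation (j,S) to (j',S'):
a family T : ℤ → linear maps, T z being the component of index μ = z - γ, vanishing for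
z ∉ {0,...,G}, satisfying [J₀,T_μ] = μ T_μ and [J_±,T_μ] = C_±(γ,μ) T_{μ±1}. -/
def IsTensorOp (G : ℕ) (j j' : ℂ) (S S' : Set ℂ)
    (T : ℤ → (RepSp S →ₗ[ℂ] RepSp S')) : Prop :=
  (∀ z : ℤ, (z < 0 ∨ (G : ℤ) < z) → T z = 0) ∧
  (∀ z : ℤ, repJ0 S' ∘ₗ T z - T z ∘ₗ repJ0 S = ((z : ℂ) - (G : ℂ) / 2) • T z) ∧
  (∀ z : ℤ, repJp j' S' ∘ₗ T z - T z ∘ₗ repJp j S =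
    Cp ((G : ℂ) / 2) ((z : ℂ) - (G : ℂ) / 2) • T (z + 1)) ∧
  (∀ z : ℤ, repJm j' S' ∘ₗ T z - T z ∘ₗ repJm j S =
    Cm ((G : ℂ) / 2) ((z : ℂ) - (G : ℂ) / 2) • T (z - 1))

/-- The label J = j + ν - γ of the ν-th summand in the decomposition of F_γ ⊗ ρ_j. -/
def jlab (G : ℕ) (j : ℂ) (ν : Fin (G + 1)) : ℂ := j + ((ν : ℕ) : ℂ) - (G : ℂ) / 2

/-- μ = z - γ. -/
def mucz (G : ℕ) (z : ℤ) : ℂ := (z : ℂ) - (G : ℂ) / 2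

/-! ### The coefficients `C_±` and weight sets -/

lemma csqrt_sq (w : ℂ) : csqrt w * csqrt w = w := by
  unfold csqrt
  rw [← sq, ← Complex.cpow_mul_nat]
  norm_num

lemma csqrt_eq_zero_iff (w : ℂ) : csqrt w = 0 ↔ w = 0 := by
  have h := csqrt_sq w
  constructor
  · intro h0
    rw [← h, h0, mul_zero]
  · intro h0
    rw [h0] at h ⊢
    exact mul_self_eq_zero.mp h

lemma Cm_eq_Cp (j m : ℂ) : Cm j m = Cp j (m - 1) := by
  unfold Cm Cp
  rw [show j - (m - 1) = j - m + 1 by ring, show j + (m - 1) + 1 = j + m by ring]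
  ring

lemma Cp_sq (j m : ℂ) : Cp j m * Cp j m = m * (m + 1) - j * (j + 1) := by
  have h1 := csqrt_sq (j - m)
  have h2 := csqrt_sq (j + m + 1)
  have h3 := Complex.I_mul_I
  unfold Cp
  calc _ = (Complex.I * Complex.I) * (csqrt (j - m) * csqrt (j - m)) *
        (csqrt (j + m + 1) * csqrt (j + m + 1)) := by ring
    _ = _ := by rw [h1, h2, h3]; ring

lemma Cp_eq_zero_iff (j m : ℂ) : Cp j m = 0 ↔ m = j ∨ m = -j - 1 := by
  unfold Cp
  rw [mul_eq_zero, mul_eq_zero, csqrt_eq_zero_iff, csqrt_eq_zero_iff]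
  simp only [Complex.I_ne_zero, false_or]
  constructor
  · rintro (h | h)
    · exact Or.inl (by linear_combination -h)
    · exact Or.inr (by linear_combination h)
  · rintro (h | h)
    · exact Or.inl (by rw [h]; ring)
    · exact Or.inr (by rw [h]; ring)

/-- Leaving the weight set upwards costs a vanishing coefficient `C₊`. -/
lemma Cp_eq_zero_of_exit {j : ℂ} {S : Set ℂ} (hS : IsStdWeightSet j S) {m : ℂ}
    (h : m ∈ S) (h1 : m + 1 ∉ S) : Cp j m = 0 := by
  rw [Cp_eq_zero_iff]
  rcases hS with ⟨n, hn, rfl⟩ | ⟨n, hn, rfl⟩ | ⟨n, hn, rfl⟩ | ⟨ε, hε, rfl, hj⟩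
  · obtain ⟨z, hz, rfl⟩ := h
    rcases hz.eq_or_lt with rfl | hlt
    · exact Or.inl (by linear_combination -hn)
    · exact absurd ⟨z + 1, hlt, by push_cast; ring⟩ h1
  · obtain ⟨z, rfl⟩ := h
    exact absurd ⟨z + 1, by push_cast; ring⟩ h1
  · obtain ⟨z, rfl⟩ := h
    rcases z with _ | z
    · exact Or.inr (by simp)
    · exact absurd ⟨z, by push_cast; ring⟩ h1
  · obtain ⟨z, rfl⟩ := h
    exact absurd ⟨z + 1, by push_cast; ring⟩ h1

/-- Entering the weight set from below costs a vanishing coefficient `C₊`. -/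
lemma Cp_eq_zero_of_enter {j : ℂ} {S : Set ℂ} (hS : IsStdWeightSet j S) {m : ℂ}
    (h : m ∉ S) (h1 : m + 1 ∈ S) : Cp j m = 0 := by
  rw [Cp_eq_zero_iff]
  rcases hS with ⟨n, hn, rfl⟩ | ⟨n, hn, rfl⟩ | ⟨n, hn, rfl⟩ | ⟨ε, hε, rfl, hj⟩
  · obtain ⟨z, hz, hm⟩ := h1
    rcases z with _ | z
    · exact Or.inr (by push_cast at hm; linear_combination hm)
    · exact absurd ⟨z, by omega, by push_cast at hm; linear_combination hm⟩ h
  · obtain ⟨z, hm⟩ := h1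
    rcases z with _ | z
    · exact Or.inl (by push_cast at hm; linear_combination hm)
    · exact absurd ⟨z, by push_cast at hm; linear_combination hm⟩ h
  · obtain ⟨z, hm⟩ := h1
    exact absurd ⟨z + 1, by push_cast; linear_combination hm⟩ h
  · obtain ⟨z, hm⟩ := h1
    exact absurd ⟨z - 1, by push_cast; linear_combination hm⟩ h

/-- Inside the weight set the raising coefficient does not vanish. -/
lemma Cp_ne_zero {j : ℂ} {S : Set ℂ} (hS : IsStdWeightSet j S) {m : ℂ}
    (h : m ∈ S) (h1 : m + 1 ∈ S) : Cp j m ≠ 0 := by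
  rw [Ne, Cp_eq_zero_iff]
  rcases hS with ⟨n, hn, rfl⟩ | ⟨n, hn, rfl⟩ | ⟨n, hn, rfl⟩ | ⟨ε, hε, rfl, hj⟩
  · obtain ⟨z, hz, hm⟩ := h
    obtain ⟨w, hw, hm1⟩ := h1
    rintro (h0 | h0)
    · have : (w : ℂ) = ((n + 1 : ℕ) : ℂ) := by
        push_cast; linear_combination h0 - hm1 + hn
      have := Nat.cast_injective this
      omega
    · have : ((z + 1 : ℕ) : ℂ) = ((0 : ℕ) : ℂ) := by
        push_cast; linear_combination h0 - hm
      have := Nat.cast_injective this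
      omega
  · obtain ⟨z, hm⟩ := h
    rintro (h0 | h0)
    · have : ((z + 1 : ℕ) : ℂ) = ((0 : ℕ) : ℂ) := by
        push_cast; linear_combination h0 - hm
      have := Nat.cast_injective this
      omega
    · have : ((n + z + 1 : ℕ) : ℂ) = ((0 : ℕ) : ℂ) := by
        push_cast; linear_combination h0 - hm - hn
      have := Nat.cast_injective this
      omega
  · obtain ⟨z, hm⟩ := h
    obtain ⟨w, hm1⟩ := h1
    rintro (h0 | h0)
    · have : ((n + w + 1 : ℕ) : ℂ) = ((0 : ℕ) : ℂ) := by
        push_cast; linear_combination hm1 - h0 - hn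
      have := Nat.cast_injective this
      omega
    · have : ((w + 1 : ℕ) : ℂ) = ((0 : ℕ) : ℂ) := by
        push_cast; linear_combination hm1 - h0
      have := Nat.cast_injective this
      omega
  · obtain ⟨z, hm⟩ := h
    have key : ¬ ∃ k : ℤ, j - ε = (k : ℂ) := by
      rintro ⟨k, hk⟩
      refine hj ?_ ⟨k, hk⟩
      rcases hε with rfl | rfl
      · exact ⟨2 * k, by push_cast; linear_combination 2 * hk⟩
      · exact ⟨2 * k + 1, by push_cast; linear_combination 2 * hk⟩
    rintro (h0 | h0)
    · exact key ⟨z, by linear_combination hm - h0⟩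
    · rcases hε with rfl | rfl
      · exact key ⟨-z - 1, by push_cast; linear_combination h0 - hm⟩
      · exact key ⟨-z - 2, by push_cast; linear_combination h0 - hm⟩

/-- Weight sets are strings of consecutive weights, so invariance under unit steps inside the set
means being constant on it. -/
lemma const_of_step {j : ℂ} {S : Set ℂ} (hS : IsStdWeightSet j S) (f : ℂ → ℂ)
    (hf : ∀ m ∈ S, m + 1 ∈ S → f (m + 1) = f m) : ∃ c, ∀ m ∈ S, f m = c := by
  rcases hS with ⟨n, hn, rfl⟩ | ⟨n, hn, rfl⟩ | ⟨n, hn, rfl⟩ | ⟨ε, hε, rfl, hj⟩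
  · refine ⟨f (-j), ?_⟩
    rintro m ⟨z, hz, rfl⟩
    induction z with
    | zero => simp
    | succ z ih =>
      rw [← ih (by omega), ← hf _ ⟨z, by omega, rfl⟩ ⟨z + 1, hz, by push_cast; ring⟩]
      push_cast; ring_nf
  · refine ⟨f (j + 1), ?_⟩
    rintro m ⟨z, rfl⟩
    induction z with
    | zero => simp
    | succ z ih =>
      rw [← ih, ← hf _ ⟨z, rfl⟩ ⟨z + 1, by push_cast; ring⟩]
      push_cast; ring_nf
  · refine ⟨f (-j - 1), ?_⟩
    rintro m ⟨z, rfl⟩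
    induction z with
    | zero => simp
    | succ z ih =>
      rw [← ih, ← hf _ ⟨z + 1, rfl⟩ ⟨z, by push_cast; ring⟩]
      push_cast; ring_nf
  · refine ⟨f ε, ?_⟩
    rintro m ⟨z, rfl⟩
    induction z using Int.induction_on with
    | zero => simp
    | succ z ih =>
      rw [← ih, ← hf _ ⟨z, rfl⟩ ⟨z + 1, by push_cast; ring⟩]
      push_cast; ring_nf
    | pred z ih =>
      rw [← ih, ← hf _ ⟨-z - 1, rfl⟩ ⟨-z, by push_cast; ring⟩]
      push_cast; ring_nf

/-! ### Coordinates of the representation operators -/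

/-- The coefficient of `|j',M⟩` in `v`, read as `0` when `M` is not a weight. -/
def coef {S : Set ℂ} (v : RepSp S) (M : ℂ) : ℂ :=
  haveI := Classical.dec (M ∈ S)
  if h : M ∈ S then v ⟨M, h⟩ else 0

lemma coef_of_mem {S : Set ℂ} (v : RepSp S) {M : ℂ} (h : M ∈ S) : coef v M = v ⟨M, h⟩ := by
  simp [coef, h]

lemma coef_of_not_mem {S : Set ℂ} (v : RepSp S) {M : ℂ} (h : M ∉ S) : coef v M = 0 := by
  simp [coef, h]

lemma coef_sub {S : Set ℂ} (v w : RepSp S) (M : ℂ) : coef (v - w) M = coef v M - coef w M := by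
  by_cases h : M ∈ S <;> simp [coef, h]

lemma coef_add {S : Set ℂ} (v w : RepSp S) (M : ℂ) : coef (v + w) M = coef v M + coef w M := by
  by_cases h : M ∈ S <;> simp [coef, h]

lemma coef_smul {S : Set ℂ} (c : ℂ) (v : RepSp S) (M : ℂ) : coef (c • v) M = c * coef v M := by
  by_cases h : M ∈ S <;> simp [coef, h]

lemma coef_bvec {S : Set ℂ} (m c M : ℂ) (h : m ∈ S) :
    coef (bvec S m c) M = if M = m then c else 0 := by
  by_cases hM : M ∈ S
  · simp only [coef_of_mem _ hM, bvec, h, dif_pos, Finsupp.single_apply, Subtype.mk.injEq]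
    simp only [eq_comm]
  · rw [coef_of_not_mem _ hM, if_neg]
    rintro rfl
    exact hM h

lemma bvec_of_not_mem {S : Set ℂ} {m : ℂ} (c : ℂ) (h : m ∉ S) : bvec S m c = 0 := by
  simp [bvec, h]

lemma bvec_eq_smul {S : Set ℂ} (m c : ℂ) : bvec S m c = c • bvec S m 1 := by
  by_cases h : m ∈ S <;> simp [bvec, h]

lemma coef_J0 {S : Set ℂ} (v : RepSp S) (M : ℂ) : coef (repJ0 S v) M = M * coef v M := by
  induction v using Finsupp.induction_linear with
  | zero => by_cases h : M ∈ S <;> simp [coef, h]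
  | add v w hv hw => rw [map_add, coef_add, coef_add, hv, hw]; ring
  | single a b =>
    by_cases h : M ∈ S
    · rw [coef_of_mem _ h, coef_of_mem _ h]
      simp only [repJ0, Finsupp.lsum_single, LinearMap.toSpanSingleton_apply, Finsupp.smul_single,
        Finsupp.single_apply, smul_eq_mul]
      split_ifs with hh
      · rw [hh]; ring
      · ring
    · rw [coef_of_not_mem _ h, coef_of_not_mem _ h, mul_zero]

/-- No condition on `M` is needed: when exactly one of `M`, `M + 1` is a weight, either both sides
vanish by convention or `C₊(j,M) = 0`. -/
lemma coef_Jp {j : ℂ} {S : Set ℂ} (hS : IsStdWeightSet j S) (v : RepSp S) (M : ℂ) :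
    coef (repJp j S v) (M + 1) = Cp j M * coef v M := by
  induction v using Finsupp.induction_linear with
  | zero => by_cases h : M ∈ S <;> by_cases h1 : M + 1 ∈ S <;> simp [coef, h, h1]
  | add v w hv hw => rw [map_add, coef_add, coef_add, hv, hw]; ring
  | single a b =>
    have e : (Finsupp.single a b : RepSp S) = bvec S a b := by simp [bvec]
    have : repJp j S (Finsupp.single a b) = b • bvec S (a + 1) (Cp j a) := by
      simp only [repJp, Finsupp.lsum_single, LinearMap.toSpanSingleton_apply]
    rw [this, e, coef_smul, coef_bvec _ _ _ a.2]
    by_cases h1 : (a : ℂ) + 1 ∈ S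
    · rw [coef_bvec _ _ _ h1]
      by_cases hM : M = a
      · simp [hM, mul_comm]
      · simp [hM]
    · rw [bvec_of_not_mem _ h1, ← zero_smul ℂ (0 : RepSp S), coef_smul]
      split_ifs with hM
      · rw [hM, Cp_eq_zero_of_exit hS a.2 h1]; ring
      · ring

lemma coef_Jm {j : ℂ} {S : Set ℂ} (hS : IsStdWeightSet j S) (v : RepSp S) (M : ℂ) :
    coef (repJm j S v) (M - 1) = Cm j M * coef v M := by
  induction v using Finsupp.induction_linear with
  | zero => by_cases h : M ∈ S <;> by_cases h1 : M - 1 ∈ S <;> simp [coef, h, h1]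
  | add v w hv hw => rw [map_add, coef_add, coef_add, hv, hw]; ring
  | single a b =>
    have e : (Finsupp.single a b : RepSp S) = bvec S a b := by simp [bvec]
    have : repJm j S (Finsupp.single a b) = b • bvec S (a - 1) (Cm j a) := by
      simp only [repJm, Finsupp.lsum_single, LinearMap.toSpanSingleton_apply]
    rw [this, e, coef_smul, coef_bvec _ _ _ a.2]
    by_cases h1 : (a : ℂ) - 1 ∈ S
    · rw [coef_bvec _ _ _ h1]
      by_cases hM : M = a
      · simp [hM, mul_comm]
      · simp [hM]
    · rw [bvec_of_not_mem _ h1, ← zero_smul ℂ (0 : RepSp S), coef_smul]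
      split_ifs with hM
      · rw [hM, Cm_eq_Cp, Cp_eq_zero_of_enter hS h1 (by simp)]; ring
      · ring

lemma J0_bvec {S : Set ℂ} (m : ℂ) : repJ0 S (bvec S m 1) = m • bvec S m 1 := by
  by_cases h : m ∈ S
  · simp [bvec, h, repJ0]
  · simp [bvec, h]

/-- `J₊|j,m⟩ = C₊(j,m)|j,m+1⟩` for every complex `m`, with `|j,m⟩ = 0` off the weight set. -/
lemma Jp_bvec {j : ℂ} {S : Set ℂ} (hS : IsStdWeightSet j S) (m : ℂ) :
    repJp j S (bvec S m 1) = Cp j m • bvec S (m + 1) 1 := by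
  by_cases h : m ∈ S
  · rw [← bvec_eq_smul]
    simp [bvec, h, repJp]
  · rw [bvec_of_not_mem _ h, map_zero]
    by_cases h1 : m + 1 ∈ S
    · rw [Cp_eq_zero_of_enter hS h h1, zero_smul]
    · rw [bvec_of_not_mem _ h1, smul_zero]

/-- `J₋|j,m⟩ = C₋(j,m)|j,m-1⟩` for every complex `m`, with `|j,m⟩ = 0` off the weight set. -/
lemma Jm_bvec {j : ℂ} {S : Set ℂ} (hS : IsStdWeightSet j S) (m : ℂ) :
    repJm j S (bvec S m 1) = Cm j m • bvec S (m - 1) 1 := by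
  by_cases h : m ∈ S
  · rw [← bvec_eq_smul]
    simp [bvec, h, repJm]
  · rw [bvec_of_not_mem _ h, map_zero]
    by_cases h1 : m - 1 ∈ S
    · rw [Cm_eq_Cp, Cp_eq_zero_of_exit hS h1 (by simpa using h), zero_smul]
    · rw [bvec_of_not_mem _ h1, smul_zero]

/-! ### Matrix elements of tensor operators -/

/-- The matrix element `⟨j',M|T_μ|j,m⟩` with `μ = z - γ`, extended by `0` to all complex `m`, `M`. -/
def tcoef {S S' : Set ℂ} (T : ℤ → (RepSp S →ₗ[ℂ] RepSp S')) (z : ℤ) (m M : ℂ) : ℂ :=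
  coef (T z (bvec S m 1)) M

lemma tcoef_of_mem {S S' : Set ℂ} (T : ℤ → (RepSp S →ₗ[ℂ] RepSp S')) (z : ℤ) {m M : ℂ}
    (hm : m ∈ S) (hM : M ∈ S') :
    tcoef T z m M = T z (Finsupp.single (⟨m, hm⟩ : ↥S) 1) (⟨M, hM⟩ : ↥S') := by
  simp [tcoef, coef, bvec, hm, hM]

lemma tcoef_of_not_mem {S S' : Set ℂ} (T : ℤ → (RepSp S →ₗ[ℂ] RepSp S')) (z : ℤ) {m : ℂ}
    (M : ℂ) (hm : m ∉ S) : tcoef T z m M = 0 := by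
  simp [tcoef, bvec_of_not_mem _ hm, coef]

section TensorOp

variable {G : ℕ} {j j' : ℂ} {S S' : Set ℂ} {T : ℤ → (RepSp S →ₗ[ℂ] RepSp S')}

lemma tcoef_out (hT : IsTensorOp G j j' S S' T) {z : ℤ} (hz : z < 0 ∨ (G : ℤ) < z) (m M : ℂ) :
    tcoef T z m M = 0 := by
  simp [tcoef, hT.1 z hz, coef]

lemma tcoef_weight (hT : IsTensorOp G j j' S S' T) (z : ℤ) {m M : ℂ}
    (h : M ≠ m + mucz G z) : tcoef T z m M = 0 := by
  have h0 := congrArg (fun L => coef (L (bvec S m 1)) M) (hT.2.1 z)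
  simp only [LinearMap.sub_apply, LinearMap.comp_apply, LinearMap.smul_apply, coef_sub, coef_J0,
    J0_bvec, map_smul, coef_smul] at h0
  have h1 : (M - (m + mucz G z)) * tcoef T z m M = 0 := by
    unfold tcoef mucz
    linear_combination h0
  exact (mul_eq_zero.mp h1).resolve_left (sub_ne_zero.mpr h)

lemma tcoef_Cp (hS : IsStdWeightSet j S) (hS' : IsStdWeightSet j' S')
    (hT : IsTensorOp G j j' S S' T) (z : ℤ) (m M : ℂ) :
    Cp j' M * tcoef T z m M =
      Cp ((G : ℂ) / 2) (mucz G z) * tcoef T (z + 1) m (M + 1) +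
        Cp j m * tcoef T z (m + 1) (M + 1) := by
  have h0 := congrArg (fun L => coef (L (bvec S m 1)) (M + 1)) (hT.2.2.1 z)
  simp only [LinearMap.sub_apply, LinearMap.comp_apply, LinearMap.smul_apply, coef_sub,
    coef_Jp hS', Jp_bvec hS, map_smul, coef_smul] at h0
  unfold tcoef mucz
  linear_combination h0

lemma tcoef_Cm (hS : IsStdWeightSet j S) (hS' : IsStdWeightSet j' S')
    (hT : IsTensorOp G j j' S S' T) (z : ℤ) (m M : ℂ) :
    Cm j' M * tcoef T z m M =
      Cm ((G : ℂ) / 2) (mucz G z) * tcoef T (z - 1) m (M - 1) +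
        Cm j m * tcoef T z (m - 1) (M - 1) := by
  have h0 := congrArg (fun L => coef (L (bvec S m 1)) (M - 1)) (hT.2.2.2 z)
  simp only [LinearMap.sub_apply, LinearMap.comp_apply, LinearMap.smul_apply, coef_sub,
    coef_Jm hS', Jm_bvec hS, map_smul, coef_smul] at h0
  unfold tcoef mucz
  linear_combination h0

end TensorOp

/-! ### Recoupling with the Clebsch–Gordan coefficients -/

lemma sum_shift_down (G : ℕ) (f : ℤ → ℂ) (h0 : f (-1) = 0) (h1 : f G = 0) :
    ∑ z ∈ Finset.range (G + 1), f ((z : ℤ) - 1) = ∑ z ∈ Finset.range (G + 1), f z := by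
  rw [Finset.sum_range_succ', Finset.sum_range_succ, h1]
  simp [h0]

lemma sum_shift_up (G : ℕ) (f : ℤ → ℂ) (h0 : f 0 = 0) (h1 : f (G + 1) = 0) :
    ∑ z ∈ Finset.range (G + 1), f ((z : ℤ) + 1) = ∑ z ∈ Finset.range (G + 1), f z := by
  rw [Finset.sum_range_succ, Finset.sum_range_succ', h1]
  simp [h0]

lemma mucz_add_one (G : ℕ) (z : ℤ) : mucz G (z + 1) = mucz G z + 1 := by
  unfold mucz; push_cast; ring

lemma mucz_sub_one (G : ℕ) (z : ℤ) : mucz G (z - 1) = mucz G z - 1 := by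
  unfold mucz; push_cast; ring

/-- The coefficient of `|j',M⟩` in `∑_μ A(γ,μ;j,M-μ|J,M) T_μ|j,M-μ⟩`, where the function
`a z m M` stands for `A(γ,μ;j,m|J,M)` with `μ = z - γ` and `J` fixed. -/
def redCoef (G : ℕ) {S S' : Set ℂ} (T : ℤ → (RepSp S →ₗ[ℂ] RepSp S'))
    (a : ℤ → ℂ → ℂ → ℂ) (M : ℂ) : ℂ :=
  ∑ z ∈ Finset.range (G + 1), a z (M - mucz G z) M * tcoef T z (M - mucz G z) M

section Reduced

variable {G : ℕ} {j j' J : ℂ} {S S' : Set ℂ} {T : ℤ → (RepSp S →ₗ[ℂ] RepSp S')}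
  {a : ℤ → ℂ → ℂ → ℂ}

/-- `|J,M⟩ ↦ t_J(M)` commutes with `J₊`: the terms `C₊(γ,μ) A T_{μ+1}` from the recursion for `A`
and from the tensor operator relation match after shifting `μ` by one, the boundary terms being
zero. -/
lemma redCoef_Cp (hS : IsStdWeightSet j S) (hS' : IsStdWeightSet j' S')
    (hT : IsTensorOp G j j' S S' T)
    (ha0 : ∀ z m M, (z < 0 ∨ (G : ℤ) < z) → a z m M = 0)
    (hrec : ∀ (z : ℤ) (m M : ℂ), Cp J M * a z m (M + 1) =
      Cp ((G : ℂ) / 2) (mucz G (z - 1)) * a (z - 1) m M + Cp j (m - 1) * a z (m - 1) M)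
    (M : ℂ) : Cp J M * redCoef G T a (M + 1) = Cp j' M * redCoef G T a M := by
  have key := sum_shift_down G
    (fun w => Cp ((G : ℂ) / 2) (mucz G w) * a w (M - mucz G w) M *
      tcoef T (w + 1) (M - mucz G w) (M + 1))
    (by simp [ha0 (-1) _ _ (Or.inl (by norm_num))])
    (by simp [tcoef_out hT (z := (G : ℤ) + 1) (Or.inr (by omega))])
  unfold redCoef
  rw [Finset.mul_sum, Finset.mul_sum]
  calc _ = ∑ z ∈ Finset.range (G + 1),
        (Cp ((G : ℂ) / 2) (mucz G ((z : ℤ) - 1)) * a ((z : ℤ) - 1) (M - mucz G ((z : ℤ) - 1)) M *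
          tcoef T ((z : ℤ) - 1 + 1) (M - mucz G ((z : ℤ) - 1)) (M + 1) +
        Cp j (M - mucz G z) * a z (M - mucz G z) M *
          tcoef T z (M - mucz G z + 1) (M + 1)) := by
        refine Finset.sum_congr rfl fun z _ => ?_
        have h := hrec z (M + 1 - mucz G z) M
        have e1 : M - mucz G ((z : ℤ) - 1) = M + 1 - mucz G z := by rw [mucz_sub_one]; ring
        rw [e1, sub_add_cancel, show M - mucz G z + 1 = M + 1 - mucz G z by ring]
        rw [show M + 1 - mucz G z - 1 = M - mucz G z by ring] at h
        linear_combination tcoef T z (M + 1 - mucz G z) (M + 1) * h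
    _ = _ := by
        rw [Finset.sum_add_distrib, key, ← Finset.sum_add_distrib]
        refine Finset.sum_congr rfl fun z _ => ?_
        have h := tcoef_Cp hS hS' hT z (M - mucz G z) M
        linear_combination -a z (M - mucz G z) M * h

lemma redCoef_Cm (hS : IsStdWeightSet j S) (hS' : IsStdWeightSet j' S')
    (hT : IsTensorOp G j j' S S' T)
    (ha0 : ∀ z m M, (z < 0 ∨ (G : ℤ) < z) → a z m M = 0)
    (hrec : ∀ (z : ℤ) (m M : ℂ), Cm J M * a z m (M - 1) =
      Cm ((G : ℂ) / 2) (mucz G (z + 1)) * a (z + 1) m M + Cm j (m + 1) * a z (m + 1) M)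
    (M : ℂ) : Cm J M * redCoef G T a (M - 1) = Cm j' M * redCoef G T a M := by
  have key := sum_shift_up G
    (fun w => Cm ((G : ℂ) / 2) (mucz G w) * a w (M - mucz G w) M *
      tcoef T (w - 1) (M - mucz G w) (M - 1))
    (by simp [tcoef_out hT (z := (-1 : ℤ)) (Or.inl (by omega))])
    (by simp [ha0 ((G : ℤ) + 1) _ _ (Or.inr (by omega))])
  unfold redCoef
  rw [Finset.mul_sum, Finset.mul_sum]
  calc _ = ∑ z ∈ Finset.range (G + 1),
        (Cm ((G : ℂ) / 2) (mucz G ((z : ℤ) + 1)) * a ((z : ℤ) + 1) (M - mucz G ((z : ℤ) + 1)) M *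
          tcoef T ((z : ℤ) + 1 - 1) (M - mucz G ((z : ℤ) + 1)) (M - 1) +
        Cm j (M - mucz G z) * a z (M - mucz G z) M *
          tcoef T z (M - mucz G z - 1) (M - 1)) := by
        refine Finset.sum_congr rfl fun z _ => ?_
        have h := hrec z (M - 1 - mucz G z) M
        have e1 : M - mucz G ((z : ℤ) + 1) = M - 1 - mucz G z := by rw [mucz_add_one]; ring
        rw [e1, add_sub_cancel_right, show M - mucz G z - 1 = M - 1 - mucz G z by ring]
        rw [show M - 1 - mucz G z + 1 = M - mucz G z by ring] at h
        linear_combination tcoef T z (M - 1 - mucz G z) (M - 1) * h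
    _ = _ := by
        rw [Finset.sum_add_distrib, key, ← Finset.sum_add_distrib]
        refine Finset.sum_congr rfl fun z _ => ?_
        have h := tcoef_Cm hS hS' hT z (M - mucz G z) M
        linear_combination -a z (M - mucz G z) M * h

/-- A sequence transforming under `C_±` like an intertwiner from label `J` to label `j'` vanishes
when the Casimir values differ. -/
lemma redCoef_casimir {t : ℂ → ℂ}
    (hp : ∀ M, Cp J M * t (M + 1) = Cp j' M * t M)
    (hm : ∀ M, Cm J M * t (M - 1) = Cm j' M * t M)
    (hJ : J * (J + 1) ≠ j' * (j' + 1)) (M : ℂ) : t M = 0 := by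
  have h1 := hp M
  have h2 := hm (M + 1)
  rw [Cm_eq_Cp, Cm_eq_Cp, add_sub_cancel_right] at h2
  have h3 : (J * (J + 1) - j' * (j' + 1)) * t M = 0 := by
    linear_combination -t M * Cp_sq j' M + t M * Cp_sq J M - Cp J M * h2 - Cp j' M * h1
  exact (mul_eq_zero.mp h3).resolve_left (sub_ne_zero.mpr hJ)

end Reduced

/-- The first orthogonality relation expands a matrix element of `T` in the coefficients
`redCoef`. -/
lemma tcoef_eq_sum {G : ℕ} {S S' : Set ℂ} (T : ℤ → (RepSp S →ₗ[ℂ] RepSp S'))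
    (D : Finset (Fin (G + 1))) (A B : ℤ → ℂ → Fin (G + 1) → ℂ → ℂ)
    (horth1diag : ∀ (z : ℤ) (m : ℂ), 0 ≤ z → z ≤ (G : ℤ) → m ∈ S →
      (∑ ν ∈ D, A z m ν (m + mucz G z) * B z m ν (m + mucz G z)) = 1)
    (horth1off : ∀ (z z' : ℤ) (m m' : ℂ), 0 ≤ z → z ≤ (G : ℤ) → 0 ≤ z' → z' ≤ (G : ℤ) →
      m ∈ S → m' ∈ S → (z ≠ z' ∨ m ≠ m') →
      (∑ ν ∈ D, A z m ν (m + mucz G z) * B z' m' ν (m + mucz G z)) = 0)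
    (z : ℤ) (h0 : 0 ≤ z) (h1 : z ≤ (G : ℤ)) (m : ℂ) (hm : m ∈ S) :
    tcoef T z m (m + mucz G z) = ∑ ν ∈ D, B z m ν (m + mucz G z) *
      redCoef G T (fun z m M => A z m ν M) (m + mucz G z) := by
  obtain ⟨n, rfl⟩ := Int.eq_ofNat_of_zero_le h0
  set M := m + mucz G n with hM
  have hmM : m = M - mucz G n := by rw [hM]; ring
  unfold redCoef
  simp_rw [Finset.mul_sum]
  rw [Finset.sum_comm, Finset.sum_eq_single n]
  · rw [← hmM]
    have h := horth1diag n m h0 h1 hm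
    rw [← hM] at h
    calc _ = 1 * tcoef T n m M := (one_mul _).symm
      _ = _ := by
        rw [← h, Finset.sum_mul]
        exact Finset.sum_congr rfl fun ν _ => by ring
  · intro w hw hwn
    by_cases hwS : M - mucz G w ∈ S
    · have hwG := Finset.mem_range.mp hw
      have h := horth1off w n (M - mucz G w) m (by omega) (by omega) h0 h1 hwS hm
        (Or.inl (by exact_mod_cast hwn))
      rw [sub_add_cancel] at h
      calc _ = (∑ ν ∈ D, A w (M - mucz G w) ν M * B n m ν M) *
              tcoef T w (M - mucz G w) M := by
            rw [Finset.sum_mul]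
            exact Finset.sum_congr rfl fun ν _ => by ring
        _ = 0 := by rw [h, zero_mul]
    · exact Finset.sum_eq_zero fun ν _ => by rw [tcoef_of_not_mem T _ _ hwS]; ring
  · intro h
    exact absurd (Finset.mem_range.mpr (by omega)) h

/-- **Wigner–Eckart theorem for sl(2,ℝ).**
Given standard-basis representations ρ_j, ρ_{j'}, a rank-γ tensor operator T from V_j to
V_{j'}, and Clebsch–Gordan data (D(γ,j), weight sets M_J, coefficients A and B satisfying
the vanishing, orthogonality and recursion relations) for the coupling F_γ ⊗ ρ_j such that
the values J(J+1), J ∈ D(γ,j), are pairwise distinct, J(J+1) ≠ j'(j'+1) for J ∈ D(γ,j) with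
J ≠ j', and M_J = M_{j'} when J = j' ∈ D(γ,j), there is a reduced matrix element c ∈ ℂ with
⟨j',m'| T_μ |j,m⟩ = c · B(j',m'|γ,μ;j,m), the latter read as 0 when j' ∉ D(γ,j); in
particular T_μ = 0 for all μ if j' ∉ D(γ,j). -/
theorem wigner_eckart_sl2R (G : ℕ) (hG : 1 ≤ G) (j j' : ℂ) (S S' : Set ℂ)
    (hS : IsStdWeightSet j S) (hS' : IsStdWeightSet j' S')
    (T : ℤ → (RepSp S →ₗ[ℂ] RepSp S')) (hT : IsTensorOp G j j' S S' T)
    (D : Finset (Fin (G + 1))) (MJ : Fin (G + 1) → Set ℂ)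
    (hMJ : ∀ ν ∈ D, IsStdWeightSet (jlab G j ν) (MJ ν))
    (A B : ℤ → ℂ → Fin (G + 1) → ℂ → ℂ)
    (hA0 : ∀ (z : ℤ) (m : ℂ) (ν : Fin (G + 1)) (M : ℂ),
      (z < 0 ∨ (G : ℤ) < z ∨ m ∉ S ∨ ν ∉ D ∨ M ∉ MJ ν ∨ M ≠ m + mucz G z) →
        A z m ν M = 0)
    (hB0 : ∀ (z : ℤ) (m : ℂ) (ν : Fin (G + 1)) (M : ℂ),
      (z < 0 ∨ (G : ℤ) < z ∨ m ∉ S ∨ ν ∉ D ∨ M ∉ MJ ν ∨ M ≠ m + mucz G z) →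
        B z m ν M = 0)
    (horth1diag : ∀ (z : ℤ) (m : ℂ), 0 ≤ z → z ≤ (G : ℤ) → m ∈ S →
      (∑ ν ∈ D, A z m ν (m + mucz G z) * B z m ν (m + mucz G z)) = 1)
    (horth1off : ∀ (z z' : ℤ) (m m' : ℂ), 0 ≤ z → z ≤ (G : ℤ) → 0 ≤ z' → z' ≤ (G : ℤ) →
      m ∈ S → m' ∈ S → (z ≠ z' ∨ m ≠ m') →
      (∑ ν ∈ D, A z m ν (m + mucz G z) * B z' m' ν (m + mucz G z)) = 0)
    (horth2diag : ∀ ν ∈ D, ∀ M ∈ MJ ν,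
      (∑ z ∈ Finset.range (G + 1),
        B (z : ℤ) (M - mucz G z) ν M * A (z : ℤ) (M - mucz G z) ν M) = 1)
    (horth2off : ∀ ν ∈ D, ∀ ν' ∈ D, ∀ M ∈ MJ ν, ∀ M' ∈ MJ ν', (ν ≠ ν' ∨ M ≠ M') →
      (∑ z ∈ Finset.range (G + 1),
        B (z : ℤ) (M - mucz G z) ν M * A (z : ℤ) (M - mucz G z) ν' M') = 0)
    (hrecp : ∀ ν ∈ D, ∀ (z : ℤ) (m M : ℂ),
      Cp (jlab G j ν) M * A z m ν (M + 1) =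
        Cp ((G : ℂ) / 2) (mucz G (z - 1)) * A (z - 1) m ν M +
          Cp j (m - 1) * A z (m - 1) ν M)
    (hrecm : ∀ ν ∈ D, ∀ (z : ℤ) (m M : ℂ),
      Cm (jlab G j ν) M * A z m ν (M - 1) =
        Cm ((G : ℂ) / 2) (mucz G (z + 1)) * A (z + 1) m ν M +
          Cm j (m + 1) * A z (m + 1) ν M)
    (hdist : ∀ ν ∈ D, ∀ ν' ∈ D,
      jlab G j ν * (jlab G j ν + 1) = jlab G j ν' * (jlab G j ν' + 1) → ν = ν')
    (hdist' : ∀ ν ∈ D, jlab G j ν ≠ j' →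
      jlab G j ν * (jlab G j ν + 1) ≠ j' * (j' + 1))
    (hMeq : ∀ ν ∈ D, jlab G j ν = j' → MJ ν = S') :
    ∃ c : ℂ,
      (∀ ν' : Fin (G + 1), ν' ∈ D → jlab G j ν' = j' →
        ∀ (z : ℤ) (m m' : ℂ) (hm : m ∈ S) (hm' : m' ∈ S'),
          (T z (Finsupp.single (⟨m, hm⟩ : ↥S) 1)) (⟨m', hm'⟩ : ↥S') =
            c * B z m ν' m') ∧
      ((∀ ν' ∈ D, jlab G j ν' ≠ j') →
        ∀ (z : ℤ) (m m' : ℂ) (hm : m ∈ S) (hm' : m' ∈ S'),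
          (T z (Finsupp.single (⟨m, hm⟩ : ↥S) 1)) (⟨m', hm'⟩ : ↥S') = 0) ∧
      ((∀ ν' ∈ D, jlab G j ν' ≠ j') → ∀ z : ℤ, T z = 0) := by
  have hp : ∀ ν ∈ D, ∀ M, Cp (jlab G j ν) M * redCoef G T (fun z m M => A z m ν M) (M + 1) =
      Cp j' M * redCoef G T (fun z m M => A z m ν M) M := fun ν hν =>
    redCoef_Cp hS hS' hT (fun z m M h => hA0 z m ν M (by tauto)) (hrecp ν hν)
  have hm : ∀ ν ∈ D, ∀ M, Cm (jlab G j ν) M * redCoef G T (fun z m M => A z m ν M) (M - 1) =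
      Cm j' M * redCoef G T (fun z m M => A z m ν M) M := fun ν hν =>
    redCoef_Cm hS hS' hT (fun z m M h => hA0 z m ν M (by tauto)) (hrecm ν hν)
  have hzero : ∀ ν ∈ D, jlab G j ν ≠ j' → ∀ M,
      redCoef G T (fun z m M => A z m ν M) M = 0 := fun ν hν hne =>
    redCoef_casimir (hp ν hν) (hm ν hν) (hdist' ν hν hne)
  have hexp := tcoef_eq_sum T D A B horth1diag horth1off
  have hnone : (∀ ν' ∈ D, jlab G j ν' ≠ j') →
      ∀ (z : ℤ) (m m' : ℂ) (hm : m ∈ S) (hm' : m' ∈ S'),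
        (T z (Finsupp.single (⟨m, hm⟩ : ↥S) 1)) (⟨m', hm'⟩ : ↥S') = 0 := by
    intro hne z m m' hmS hmS'
    rw [← tcoef_of_mem T z hmS hmS']
    by_cases hz : z < 0 ∨ (G : ℤ) < z
    · exact tcoef_out hT hz m m'
    by_cases hw : m' = m + mucz G z
    · rw [hw, hexp z (by omega) (by omega) m hmS]
      exact Finset.sum_eq_zero fun ν hν => by rw [hzero ν hν (hne ν hν), mul_zero]
    · exact tcoef_weight hT z hw
  have hnoneT : (∀ ν' ∈ D, jlab G j ν' ≠ j') → ∀ z : ℤ, T z = 0 := by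
    intro hne z
    ext a b
    simpa using hnone hne z a b a.2 b.2
  by_cases hex : ∃ ν ∈ D, jlab G j ν = j'
  · obtain ⟨ν₀, hν₀, hj₀⟩ := hex
    obtain ⟨c, hc⟩ := const_of_step hS' (redCoef G T (fun z m M => A z m ν₀ M))
      (fun M hM hM1 => by
        have h := hp ν₀ hν₀ M
        rw [hj₀] at h
        exact mul_left_cancel₀ (Cp_ne_zero hS' hM hM1) h)
    refine ⟨c, ?_, hnone, hnoneT⟩
    intro ν' hν' hj z m m' hmS hmS'
    obtain rfl : ν' = ν₀ := hdist ν' hν' ν₀ hν₀ (by rw [hj, hj₀])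
    rw [← tcoef_of_mem T z hmS hmS']
    by_cases hz : z < 0 ∨ (G : ℤ) < z
    · rw [tcoef_out hT hz m m', hB0 z m ν' m' (by tauto), mul_zero]
    by_cases hw : m' = m + mucz G z
    · subst hw
      rw [hexp z (by omega) (by omega) m hmS, Finset.sum_eq_single ν', hc _ hmS', mul_comm]
      · intro ν hν hne
        rw [hzero ν hν, mul_zero]
        intro h
        exact hne (hdist ν hν ν' hν' (by rw [h, hj]))
      · exact fun h => absurd hν' h
    · rw [tcoef_weight hT z hw, hB0 z m ν' m' (by tauto), mul_zero]
  · refine ⟨0, fun ν hν hj => absurd ⟨ν, hν, hj⟩ hex, hnone, hnoneT⟩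

end
end

section
/- Let ρ_j and ρ_{j'} be standard-basis representations with labels j, j' and weight sets M_j, M_{j'}, let T be a tensor operator of rank γ from V_j to V_{j'}, let D(γ,j) ⊆ {j−γ, …, j+γ} be a finite set of labels with weight sets M_J, and let A(γ,μ;j,m|J,M) be complex coefficients that vanish unless M = m + μ and satisfy the recursion relations C_±(J,M) A(γ,μ;j,m|J,M±1) = C_±(γ,μ∓1) A(γ,μ∓1;j,m|J,M) + C_±(j,m∓1) A(γ,μ;j,m∓1|J,M). Define, for J ∈ D(γ,j) and M ∈ M_J, the vector ψ_{J,M} := Σ_{μ=−γ}^{γ} Σ_{m∈M_j} A(γ,μ;j,m|J,M) T_μ|j,m⟩ ∈ V_{j'} (a finite sum, since only terms with m = M − μ contribute; ψ_{J,M} := 0 for M ∉ M_J). Then J₀ψ_{J,M} = M ψ_{J,M} and J_± ψ_{J,M} = C_±(J,M) ψ_{J,M±1}. -/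
/-!
The identities are a term-by-term computation. Applying the commutation relations of `T` to
`T_μ|j,m⟩` with `m = M - μ` gives `J₀ T_μ|j,m⟩ = (μ + m) T_μ|j,m⟩ = M T_μ|j,m⟩` and
`J_± T_μ|j,m⟩ = C_±(j,m) T_μ|j,m±1⟩ + C_±(γ,μ) T_{μ±1}|j,m⟩` (lemmas `tensor_J0`, `tensor_Jp`,
`tensor_Jm`). Re-indexing the second summand by `μ ↦ μ ∓ 1` turns the coefficient of
`T_μ|j,M±1-μ⟩` in `J_± ψ_{J,M}` into the right-hand side of the recursion relation. The boundary
terms of the shift vanish, at one end because `A` is zero outside the range of `μ`, at the other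
because `T` is.
-/

/-!
Standard-basis representations of sl(2,ℝ), tensor operators, and Clebsch–Gordan data.

A standard-basis representation with label j and weight set S ⊆ ℂ is modelled on the space
`↥S →₀ ℂ`, with basis vector `single ⟨m,hm⟩ 1` representing |j,m⟩. Tensor operators of rank
γ = G/2 are indexed by z : ℤ (with μ = z - γ for z ∈ {0,...,G}), vanishing out of range.
-/

noncomputable section

/-- The vector ψ_{J,M} = Σ_{μ=-γ}^{γ} Σ_{m∈M_j} A(γ,μ;j,m|J,M) T_μ|j,m⟩; only the terms with
m = M - μ contribute, so the m-sum collapses (and the coefficients A vanish for M ∉ M_J,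
making ψ_{J,M} = 0 in that case). -/
def psiJM (G : ℕ) (S S' : Set ℂ) (T : ℤ → (RepSp S →ₗ[ℂ] RepSp S'))
    (A : ℤ → ℂ → Fin (G + 1) → ℂ → ℂ) (ν : Fin (G + 1)) (M : ℂ) : RepSp S' :=
  ∑ z ∈ Finset.range (G + 1),
    A (z : ℤ) (M - mucz G z) ν M • T (z : ℤ) (bvec S (M - mucz G z) 1)

theorem bvec_of_mem {S : Set ℂ} {m : ℂ} (h : m ∈ S) (c : ℂ) :
    bvec S m c = Finsupp.single (⟨m, h⟩ : ↥S) c := by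
  simp [bvec, h]

theorem smul_bvec_one (S : Set ℂ) (m c : ℂ) : c • bvec S m 1 = bvec S m c := by
  by_cases h : m ∈ S <;> simp [bvec, h]

theorem repJ0_bvec (S : Set ℂ) (m : ℂ) : repJ0 S (bvec S m 1) = m • bvec S m 1 := by
  by_cases h : m ∈ S <;> simp [bvec, h, repJ0]

theorem repJp_bvec (j : ℂ) {S : Set ℂ} {m : ℂ} (h : m ∈ S) :
    repJp j S (bvec S m 1) = Cp j m • bvec S (m + 1) 1 := by
  simp [bvec_of_mem h, repJp, smul_bvec_one]

theorem repJm_bvec (j : ℂ) {S : Set ℂ} {m : ℂ} (h : m ∈ S) :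
    repJm j S (bvec S m 1) = Cm j m • bvec S (m - 1) 1 := by
  simp [bvec_of_mem h, repJm, smul_bvec_one]

theorem tensor_J0 {G : ℕ} {j j' : ℂ} {S S' : Set ℂ} {T : ℤ → (RepSp S →ₗ[ℂ] RepSp S')}
    (hT : IsTensorOp G j j' S S' T) (z : ℤ) (m : ℂ) :
    repJ0 S' (T z (bvec S m 1)) = (mucz G z + m) • T z (bvec S m 1) := by
  have h := LinearMap.congr_fun (hT.2.1 z) (bvec S m 1)
  simp only [LinearMap.sub_apply, LinearMap.comp_apply, LinearMap.smul_apply, repJ0_bvec,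
    map_smul] at h
  rw [sub_eq_iff_eq_add.mp h, add_smul, mucz]

theorem tensor_Jp {G : ℕ} {j j' : ℂ} {S S' : Set ℂ} {T : ℤ → (RepSp S →ₗ[ℂ] RepSp S')}
    (hT : IsTensorOp G j j' S S' T) (z : ℤ) {m : ℂ} (hm : m ∈ S) :
    repJp j' S' (T z (bvec S m 1)) =
      Cp ((G : ℂ) / 2) (mucz G z) • T (z + 1) (bvec S m 1) +
        Cp j m • T z (bvec S (m + 1) 1) := by
  have h := LinearMap.congr_fun (hT.2.2.1 z) (bvec S m 1)
  simp only [LinearMap.sub_apply, LinearMap.comp_apply, LinearMap.smul_apply, repJp_bvec j hm,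
    map_smul] at h
  rw [sub_eq_iff_eq_add.mp h, mucz]

theorem tensor_Jm {G : ℕ} {j j' : ℂ} {S S' : Set ℂ} {T : ℤ → (RepSp S →ₗ[ℂ] RepSp S')}
    (hT : IsTensorOp G j j' S S' T) (z : ℤ) {m : ℂ} (hm : m ∈ S) :
    repJm j' S' (T z (bvec S m 1)) =
      Cm ((G : ℂ) / 2) (mucz G z) • T (z - 1) (bvec S m 1) +
        Cm j m • T z (bvec S (m - 1) 1) := by
  have h := LinearMap.congr_fun (hT.2.2.2 z) (bvec S m 1)
  simp only [LinearMap.sub_apply, LinearMap.comp_apply, LinearMap.smul_apply, repJm_bvec j hm,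
    map_smul] at h
  rw [sub_eq_iff_eq_add.mp h, mucz]

/-- Shifting the index of a sum over `{0, …, n}` that vanishes at both ends of the shift. -/
theorem sum_range_shift {E : Type*} [AddCommGroup E] (f : ℤ → E) (n : ℕ) (h0 : f 0 = 0)
    (hn : f (n + 1) = 0) :
    ∑ z ∈ Finset.range (n + 1), f (z + 1) = ∑ z ∈ Finset.range (n + 1), f z := by
  have h1 := Finset.sum_range_succ (fun z : ℕ => f z) (n + 1)
  have h2 := Finset.sum_range_succ' (fun z : ℕ => f z) (n + 1)
  simp only [Nat.cast_add, Nat.cast_one, Nat.cast_zero, h0, hn, add_zero] at h1 h2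
  rw [← h2, h1]

/-- For a tensor operator T and Clebsch–Gordan coefficients A satisfying
the vanishing conditions and the recursion relations, the vectors ψ_{J,M} satisfy
J₀ ψ_{J,M} = M ψ_{J,M} and J_± ψ_{J,M} = C_±(J,M) ψ_{J,M±1}. -/
theorem psiJM_transforms (G : ℕ) (hG : 1 ≤ G) (j j' : ℂ) (S S' : Set ℂ)
    (hS : IsStdWeightSet j S) (hS' : IsStdWeightSet j' S')
    (T : ℤ → (RepSp S →ₗ[ℂ] RepSp S')) (hT : IsTensorOp G j j' S S' T)
    (D : Finset (Fin (G + 1))) (MJ : Fin (G + 1) → Set ℂ)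
    (hMJ : ∀ ν ∈ D, IsStdWeightSet (jlab G j ν) (MJ ν))
    (A : ℤ → ℂ → Fin (G + 1) → ℂ → ℂ)
    (hA0 : ∀ (z : ℤ) (m : ℂ) (ν : Fin (G + 1)) (M : ℂ),
      (z < 0 ∨ (G : ℤ) < z ∨ m ∉ S ∨ ν ∉ D ∨ M ∉ MJ ν ∨ M ≠ m + mucz G z) →
        A z m ν M = 0)
    (hrecp : ∀ ν ∈ D, ∀ (z : ℤ) (m M : ℂ),
      Cp (jlab G j ν) M * A z m ν (M + 1) =
        Cp ((G : ℂ) / 2) (mucz G (z - 1)) * A (z - 1) m ν M +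
          Cp j (m - 1) * A z (m - 1) ν M)
    (hrecm : ∀ ν ∈ D, ∀ (z : ℤ) (m M : ℂ),
      Cm (jlab G j ν) M * A z m ν (M - 1) =
        Cm ((G : ℂ) / 2) (mucz G (z + 1)) * A (z + 1) m ν M +
          Cm j (m + 1) * A z (m + 1) ν M) :
    ∀ ν ∈ D, ∀ M ∈ MJ ν,
      repJ0 S' (psiJM G S S' T A ν M) = M • psiJM G S S' T A ν M ∧
      repJp j' S' (psiJM G S S' T A ν M) =
        Cp (jlab G j ν) M • psiJM G S S' T A ν (M + 1) ∧
      repJm j' S' (psiJM G S S' T A ν M) =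
        Cm (jlab G j ν) M • psiJM G S S' T A ν (M - 1) := by
  intro ν hν M _
  refine ⟨?_, ?_, ?_⟩
  · rw [psiJM, map_sum, Finset.smul_sum]
    refine Finset.sum_congr rfl fun z _ => ?_
    rw [map_smul, tensor_J0 hT, smul_comm, add_sub_cancel]
  · have hterm : ∀ z : ℤ,
        repJp j' S' (A z (M - mucz G z) ν M • T z (bvec S (M - mucz G z) 1)) =
          (Cp ((G : ℂ) / 2) (mucz G z) * A z (M - mucz G z) ν M) •
              T (z + 1) (bvec S (M - mucz G z) 1) +
            (Cp j (M - mucz G z) * A z (M - mucz G z) ν M) •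
              T z (bvec S (M - mucz G z + 1) 1) := by
      intro z
      by_cases hm : M - mucz G z ∈ S
      · rw [map_smul, tensor_Jp hT z hm]
        module
      · rw [hA0 z _ ν M (by tauto)]
        simp
    -- The term of index `μ` after the shift `μ ↦ μ - 1` of the `T_{μ+1}` part.
    set f : ℤ → RepSp S' := fun z =>
      (Cp ((G : ℂ) / 2) (mucz G (z - 1)) * A (z - 1) (M - mucz G (z - 1)) ν M) •
        T z (bvec S (M - mucz G (z - 1)) 1) with hf
    have hshift := sum_range_shift f G
      (by simp only [hf]; rw [hA0 _ _ _ _ (Or.inl (by norm_num))]; simp)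
      (by simp only [hf]; rw [hT.1 _ (Or.inr (by omega))]; simp)
    simp only [hf, add_sub_cancel_right] at hshift
    simp only [psiJM, map_sum, Finset.smul_sum]
    rw [Finset.sum_congr rfl fun (z : ℕ) _ => hterm z, Finset.sum_add_distrib, hshift,
      ← Finset.sum_add_distrib]
    refine Finset.sum_congr rfl fun z _ => ?_
    have e1 : M - mucz G ((z : ℤ) - 1) = M + 1 - mucz G z := by
      simp only [mucz]; push_cast; ring
    have e2 : M - mucz G z = M + 1 - mucz G z - 1 := by ring
    rw [smul_smul, hrecp ν hν, add_smul, e1, ← e2]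
    congr 4
    ring
  · have hterm : ∀ z : ℤ,
        repJm j' S' (A z (M - mucz G z) ν M • T z (bvec S (M - mucz G z) 1)) =
          (Cm ((G : ℂ) / 2) (mucz G z) * A z (M - mucz G z) ν M) •
              T (z - 1) (bvec S (M - mucz G z) 1) +
            (Cm j (M - mucz G z) * A z (M - mucz G z) ν M) •
              T z (bvec S (M - mucz G z - 1) 1) := by
      intro z
      by_cases hm : M - mucz G z ∈ S
      · rw [map_smul, tensor_Jm hT z hm]
        module
      · rw [hA0 z _ ν M (by tauto)]
        simp
    -- The `T_{μ-1}` part before the shift; here `T` vanishes at the lower end and `A` at the upper.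
    set f : ℤ → RepSp S' := fun z =>
      (Cm ((G : ℂ) / 2) (mucz G z) * A z (M - mucz G z) ν M) •
        T (z - 1) (bvec S (M - mucz G z) 1) with hf
    have hshift := sum_range_shift f G
      (by simp only [hf]; rw [hT.1 _ (Or.inl (by norm_num))]; simp)
      (by simp only [hf]; rw [hA0 _ _ _ _ (Or.inr (Or.inl (by omega)))]; simp)
    simp only [hf, add_sub_cancel_right] at hshift
    simp only [psiJM, map_sum, Finset.smul_sum]
    rw [Finset.sum_congr rfl fun (z : ℕ) _ => hterm z, Finset.sum_add_distrib, ← hshift,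
      ← Finset.sum_add_distrib]
    refine Finset.sum_congr rfl fun z _ => ?_
    have e1 : M - mucz G ((z : ℤ) + 1) = M - 1 - mucz G z := by
      simp only [mucz]; push_cast; ring
    have e2 : M - mucz G z = M - 1 - mucz G z + 1 := by ring
    rw [smul_smul, hrecm ν hν, add_smul, e1, ← e2]
    congr 4
    ring

end
end

section
/- Let A be an n×n complex tridiagonal matrix (A_{ik} = 0 whenever |i−k| > 1) all of whose superdiagonal entries A_{i,i+1} are nonzero (or all of whose subdiagonal entries A_{i+1,i} are nonzero). Then A is diagonalizable if and only if A has n pairwise distinct eigenvalues. -/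
/-!
The point is that every eigenspace of `A` has dimension at most one. If the superdiagonal has no
zero entry, row `m` of `A v = c v` determines `v (m + 1)` from `v 0, …, v m`, so an eigenvector is
determined by its first coordinate; if the subdiagonal has no zero entry, it is determined by its
last coordinate in the same way. Hence, if the eigenspaces span `ℂⁿ`, there are at least `n`
eigenvalues. Conversely, eigenvectors for `n` distinct eigenvalues are linearly independent, so
they span `ℂⁿ`.
-/

/-- Forward substitution through the rows of `A v = c v`. -/
lemma eq_zero_of_superdiag {n : ℕ} (A : Matrix (Fin n) (Fin n) ℂ)
    (htri : ∀ i k : Fin n, (i : ℕ) + 1 < (k : ℕ) → A i k = 0)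
    (hs : ∀ i k : Fin n, (k : ℕ) = (i : ℕ) + 1 → A i k ≠ 0)
    (c : ℂ) (v : Fin n → ℂ) (hv : A.mulVec v = c • v) (h0 : ∀ i : Fin n, (i : ℕ) = 0 → v i = 0) :
    v = 0 := by
  have key : ∀ m : ℕ, ∀ i : Fin n, (i : ℕ) = m → v i = 0 := by
    intro m
    induction m using Nat.strong_induction_on with
    | _ m ih =>
      intro i hi
      rcases Nat.eq_zero_or_pos m with hm | hm
      · exact h0 i (by omega)
      · let j : Fin n := ⟨m - 1, by omega⟩
        have hj : (j : ℕ) = m - 1 := rfl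
        have hrow := congrFun hv j
        rw [Pi.smul_apply, ih (m - 1) (by omega) j rfl, smul_zero, Matrix.mulVec, dotProduct,
          Finset.sum_eq_single i] at hrow
        · exact (mul_eq_zero.mp hrow).resolve_left (hs j i (by omega))
        · intro k _ hki
          have hne : (k : ℕ) ≠ i := fun h => hki (Fin.ext h)
          rcases lt_or_gt_of_ne hne with h | h
          · rw [ih k (by omega) k rfl, mul_zero]
          · rw [htri j k (by omega), zero_mul]
        · intro h
          exact absurd (Finset.mem_univ i) h
  funext i
  exact key i i rfl

/-- Backward substitution: the forward case applied after reversing the order of the indices. -/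
lemma eq_zero_of_subdiag {n : ℕ} (A : Matrix (Fin n) (Fin n) ℂ)
    (htri : ∀ i k : Fin n, (k : ℕ) + 1 < (i : ℕ) → A i k = 0)
    (hs : ∀ i k : Fin n, (i : ℕ) = (k : ℕ) + 1 → A i k ≠ 0)
    (c : ℂ) (v : Fin n → ℂ) (hv : A.mulVec v = c • v)
    (h0 : ∀ i : Fin n, (i : ℕ) + 1 = n → v i = 0) :
    v = 0 := by
  have h : v ∘ Fin.rev = 0 := by
    refine eq_zero_of_superdiag (A.submatrix Fin.rev Fin.rev) ?_ ?_ c _ ?_ ?_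
    · intro i k h
      exact htri _ _ (by simp only [Fin.val_rev]; omega)
    · intro i k h
      exact hs _ _ (by simp only [Fin.val_rev]; omega)
    · funext i
      have hrow := congrFun hv i.rev
      rw [Matrix.mulVec, dotProduct, ← Equiv.sum_comp Fin.revPerm] at hrow
      simpa [Matrix.mulVec, dotProduct] using hrow
    · intro i hi
      exact h0 _ (by simp only [Fin.val_rev]; omega)
  funext i
  simpa using congrFun h i.rev

/-- If a single coordinate determines the vectors of an eigenspace, the latter has dimension at
most one. -/
lemma finrank_eigenspace_le_one {n : ℕ} (f : Module.End ℂ (Fin n → ℂ)) (c : ℂ) (j : Fin n)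
    (h : ∀ v, f v = c • v → v j = 0 → v = 0) :
    Module.finrank ℂ (Module.End.eigenspace f c) ≤ 1 := by
  let p : Module.End.eigenspace f c →ₗ[ℂ] ℂ :=
    (LinearMap.proj j).comp (Module.End.eigenspace f c).subtype
  have hp : Function.Injective p := by
    rw [injective_iff_map_eq_zero]
    intro v hv
    exact Subtype.ext (h v (Module.End.mem_eigenspace_iff.mp v.2) hv)
  simpa using LinearMap.finrank_le_finrank_of_injective hp

lemma finrank_finset_sup_le_card {V : Type*} [AddCommGroup V] [Module ℂ V] [FiniteDimensional ℂ V]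
    (E : ℂ → Submodule ℂ V) (hE : ∀ c, Module.finrank ℂ (E c) ≤ 1) (s : Finset ℂ) :
    Module.finrank ℂ (s.sup E : Submodule ℂ V) ≤ s.card := by
  induction s using Finset.induction_on with
  | empty => simp
  | insert a s ha ih =>
    rw [Finset.sup_insert, Finset.card_insert_of_notMem ha]
    have h1 := Submodule.finrank_add_le_finrank_add_finrank (E a) (s.sup E)
    have h2 := hE a
    omega

/-- Let A be an n×n complex tridiagonal matrix all of whose superdiagonal
entries are nonzero, or all of whose subdiagonal entries are nonzero. Then A is
diagonalizable if and only if A has n pairwise distinct eigenvalues. -/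
theorem tridiagonal_diagonalizable_iff (n : ℕ) (hn : 1 ≤ n)
    (A : Matrix (Fin n) (Fin n) ℂ)
    (htri : ∀ i k : Fin n, ((i : ℕ) + 1 < (k : ℕ) ∨ (k : ℕ) + 1 < (i : ℕ)) → A i k = 0)
    (hside : (∀ i k : Fin n, (k : ℕ) = (i : ℕ) + 1 → A i k ≠ 0) ∨
             (∀ i k : Fin n, (i : ℕ) = (k : ℕ) + 1 → A i k ≠ 0)) :
    (⨆ c : ℂ, Module.End.eigenspace (Matrix.toLin' A) c) = ⊤ ↔
      ∃ s : Finset ℂ, s.card = n ∧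
        ∀ c ∈ s, Module.End.HasEigenvalue (Matrix.toLin' A) c := by
  constructor
  · intro htop
    have hdim : ∀ c, Module.finrank ℂ (Module.End.eigenspace (Matrix.toLin' A) c) ≤ 1 := by
      intro c
      rcases hside with hs | hs
      · refine finrank_eigenspace_le_one _ c ⟨0, hn⟩ fun v hv hv0 => ?_
        refine eq_zero_of_superdiag A (fun i k h => htri i k (Or.inl h)) hs c v
          (by simpa using hv) fun i hi => ?_
        rwa [show i = ⟨0, hn⟩ from Fin.ext hi]
      · refine finrank_eigenspace_le_one _ c ⟨n - 1, by omega⟩ fun v hv hv0 => ?_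
        refine eq_zero_of_subdiag A (fun i k h => htri i k (Or.inr h)) hs c v
          (by simpa using hv) fun i hi => ?_
        rwa [show i = ⟨n - 1, by omega⟩ from Fin.ext (by simp only; omega)]
    have hfin : Set.Finite {c | Module.End.HasEigenvalue (Matrix.toLin' A) c} :=
      Module.End.finite_hasEigenvalue _
    have hsup : hfin.toFinset.sup (Module.End.eigenspace (Matrix.toLin' A)) = ⊤ := by
      rw [eq_top_iff, ← htop]
      refine iSup_le fun c => ?_
      by_cases hc : Module.End.HasEigenvalue (Matrix.toLin' A) c
      · exact Finset.le_sup (f := Module.End.eigenspace (Matrix.toLin' A))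
          (hfin.mem_toFinset.mpr hc)
      · rw [Module.End.hasEigenvalue_iff, not_not] at hc
        rw [hc]
        exact bot_le
    have hcard := finrank_finset_sup_le_card _ hdim hfin.toFinset
    rw [hsup, finrank_top, Module.finrank_fin_fun] at hcard
    obtain ⟨s, hs, hsn⟩ := Finset.exists_subset_card_eq hcard
    exact ⟨s, hsn, fun c hc => hfin.mem_toFinset.mp (hs hc)⟩
  · rintro ⟨s, hsn, hs⟩
    choose v hv using fun c : s => (hs c c.2).exists_hasEigenvector
    have hli : LinearIndependent ℂ v :=
      Module.End.eigenvectors_linearIndependent' (Matrix.toLin' A) (fun c : s => (c : ℂ))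
        Subtype.val_injective v hv
    have hspan := hli.span_eq_top_of_card_eq_finrank' (by simp [hsn])
    rw [eq_top_iff, ← hspan, Submodule.span_le]
    rintro _ ⟨c, rfl⟩
    exact (le_iSup (Module.End.eigenspace (Matrix.toLin' A)) (c : ℂ)) (hv c).1
end
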